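/- arXiv:2104.03588 — 11 statements merged into one kernel-verified Lean document; each statement's English description precedes it below -/
import Mathlib

section
/- Let (X, d) be a complete separable metric space and let m be a Borel measure on X that is effectively locally finite. Then the following are equivalent: (i) m is inner regular with respect to compact sets, i.e. m(E) = sup{m(K) : K ⊆ E, K compact} for every Borel set E; (ii) for every Borel set A with m(A) > 0 there exists a compact set K ⊆ A with m(K) > 0. -/
/-!
The implication from tightness to the existence of compact subsets of positive measure is
immediate. The converse is an exhaustion argument. Let `s` be the supremum of `m K` over compact
`K ⊆ E`, and suppose `s < m E`, so that `s` is finite. Choose compact `K n ⊆ E` with `m (K n) → s`.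
Finite unions of the `K n` are again compact subsets of `E`, so `m (⋃ n, K n) ≤ s` and
`E \ ⋃ n, K n` has positive measure. It therefore contains a compact `L` with `m L > 0`, disjoint
from every `K n`, and `m L + m (K n) = m (L ∪ K n) ≤ s` gives `m L + s ≤ s` in the limit, which is
impossible for finite `s`.
-/

open MeasureTheory Set ENNReal

/-- On a complete separable metric space, for an effectively locally
finite Borel measure, inner regularity with respect to compact sets is equivalent to the
property that every Borel set of positive measure contains a compact set of positive
measure. -/
theorem effectivelyLocallyFinite_innerRegular_iff_pos_compact
    {X : Type*} [MetricSpace X] [CompleteSpace X]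
    [TopologicalSpace.SeparableSpace X] [MeasurableSpace X] [BorelSpace X]
    (m : Measure X)
    (helf : ∀ A : Set X, MeasurableSet A → 0 < m A →
      ∃ U : Set X, IsOpen U ∧ m U < ⊤ ∧ 0 < m (A ∩ U)) :
    (∀ E : Set X, MeasurableSet E →
        m E = ⨆ (K : Set X) (_ : K ⊆ E) (_ : IsCompact K), m K) ↔
      (∀ A : Set X, MeasurableSet A → 0 < m A →
        ∃ K : Set X, K ⊆ A ∧ IsCompact K ∧ 0 < m K) := by
  constructor
  · intro h A hA hpos
    rw [h A hA] at hpos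
    simp only [lt_iSup_iff] at hpos
    obtain ⟨K, hKA, hK, hm⟩ := hpos
    exact ⟨K, hKA, hK, hm⟩
  · intro h E hE
    refine le_antisymm ?_ (iSup_le fun K => iSup_le fun hK => iSup_le fun _ => measure_mono hK)
    set s := ⨆ (K : Set X) (_ : K ⊆ E) (_ : IsCompact K), m K with hs
    have hle : ∀ K : Set X, K ⊆ E → IsCompact K → m K ≤ s := fun K h1 h2 =>
      le_iSup_of_le K (le_iSup_of_le h1 (le_iSup_of_le h2 le_rfl))
    by_contra! hlt
    have hfin : s ≠ ⊤ := hlt.ne_top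
    set S : Set ℝ≥0∞ := {r | ∃ K : Set X, K ⊆ E ∧ IsCompact K ∧ m K = r} with hS
    have hSs : sSup S = s := by
      refine le_antisymm (sSup_le ?_) ?_
      · rintro r ⟨K, h1, h2, rfl⟩
        exact hle K h1 h2
      · exact iSup_le fun K => iSup_le fun h1 => iSup_le fun h2 => le_sSup ⟨K, h1, h2, rfl⟩
    have hSne : S.Nonempty := ⟨m ∅, ∅, empty_subset _, isCompact_empty, rfl⟩
    obtain ⟨u, -, hu, huS⟩ := exists_seq_tendsto_sSup hSne (OrderTop.bddAbove S)
    rw [hSs] at hu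
    choose K hKE hKc hKu using huS
    have hF : m (⋃ n, K n) ≤ s := by
      rw [measure_iUnion_eq_iSup_accumulate]
      refine iSup_le fun n => hle _ ?_ ?_
      · exact iUnion₂_subset fun i _ => hKE i
      · exact (finite_Iic n).isCompact_biUnion fun i _ => hKc i
    have hpos : 0 < m (E \ ⋃ n, K n) :=
      (tsub_pos_of_lt (hF.trans_lt hlt)).trans_le le_measure_sdiff
    obtain ⟨L, hLE, hLc, hL⟩ := h _
      (hE.diff (MeasurableSet.iUnion fun n => (hKc n).measurableSet)) hpos
    have hbound : ∀ n, m L + u n ≤ s := by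
      intro n
      have hd : Disjoint L (K n) := disjoint_left.2 fun x hx hxn =>
        (hLE hx).2 (mem_iUnion.2 ⟨n, hxn⟩)
      rw [← hKu n, ← measure_union hd (hKc n).measurableSet]
      exact hle _ (union_subset (hLE.trans sdiff_subset) (hKE n)) (hLc.union (hKc n))
    have hlim : m L + s ≤ s := le_of_tendsto' (hu.const_add (m L)) hbound
    exact absurd hlim (not_le.2 (by rw [add_comm]; exact ENNReal.lt_add_right hfin hL.ne'))
end

section
/- Let (X, d) be a complete separable metric space and let m be a Borel measure on X that is effectively locally finite. Then m is inner regular with respect to compact sets, i.e. m(E) = sup{m(K) : K ⊆ E, K compact} for every Borel set E. -/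
/-!
The measure `m` is σ-finite: by second countability, countably many open sets of finite measure
have the same union `W` as all of them, and `Wᶜ` is null, since otherwise effective local
finiteness would produce an open set of finite measure, hence a subset of `W`, that meets `Wᶜ`.
On a Polish space every measure is inner regular for compact sets on Borel sets of finite measure
(Ulam's theorem), and σ-finiteness extends this to all Borel sets.
-/

open MeasureTheory Set ENNReal

/-- An effectively locally finite Borel measure on a complete separable
metric space is inner regular with respect to compact sets (tight). -/
theorem effectivelyLocallyFinite_tight
    {X : Type*} [MetricSpace X] [CompleteSpace X]
    [TopologicalSpace.SeparableSpace X] [MeasurableSpace X] [BorelSpace X]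
    (m : Measure X)
    (helf : ∀ A : Set X, MeasurableSet A → 0 < m A →
      ∃ U : Set X, IsOpen U ∧ m U < ⊤ ∧ 0 < m (A ∩ U)) :
    ∀ E : Set X, MeasurableSet E →
      m E = ⨆ (K : Set X) (_ : K ⊆ E) (_ : IsCompact K), m K := by
  have : SecondCountableTopology X := UniformSpace.secondCountable_of_separable X
  obtain ⟨T, hTc, hTS, hTU⟩ := TopologicalSpace.isOpen_sUnion_countable
    {U : Set X | IsOpen U ∧ m U < ⊤} (fun U hU => hU.1)
  have hW : IsOpen (⋃₀ T) := isOpen_sUnion fun U hU => (hTS hU).1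
  have hnull : m (⋃₀ T)ᶜ = 0 := by
    by_contra hne
    obtain ⟨U, hU, hUfin, hpos⟩ := helf _ hW.measurableSet.compl (pos_iff_ne_zero.2 hne)
    have hsub : U ⊆ ⋃₀ T := by
      rw [hTU]
      exact subset_sUnion_of_mem ⟨hU, hUfin⟩
    have hempty : (⋃₀ T)ᶜ ∩ U = ∅ :=
      (disjoint_compl_left_iff_subset.2 hsub).inter_eq
    simp [hempty] at hpos
  have : SigmaFinite m := by
    refine Measure.sigmaFinite_of_countable (S := insert (⋃₀ T)ᶜ T) (hTc.insert _) ?_ ?_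
    · rintro s (rfl | hs)
      · simp [hnull]
      · exact (hTS hs).2
    · rw [sUnion_insert, compl_union_self]
  have : m.InnerRegular := inferInstance
  exact fun E hE => hE.measure_eq_iSup_isCompact m
end

section
/- Let (X, d) be a separable metric space and let m be a Borel measure on X that is effectively locally finite. Then there exists a countable collection of open sets {U_i}_{i ∈ ℕ} such that m(U_i) < ∞ for every i ∈ ℕ and m(X \ ⋃_{i ∈ ℕ} U_i) = 0. -/
open MeasureTheory Set ENNReal

/-!
A separable metric space is second countable, hence hereditarily Lindelöf: the union of all open
sets of finite measure is already the union of countably many of them. The complement of that union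
is closed and disjoint from every open set of finite measure, so effective local finiteness forces
it to be null.
-/

/-- A separable metric space carrying an effectively locally finite
Borel measure can be covered, up to an m-null set, by countably many open sets of
finite measure. -/
theorem effectivelyLocallyFinite_countable_open_cover
    {X : Type*} [MetricSpace X]
    [TopologicalSpace.SeparableSpace X] [MeasurableSpace X] [BorelSpace X]
    (m : Measure X)
    (helf : ∀ A : Set X, MeasurableSet A → 0 < m A →
      ∃ U : Set X, IsOpen U ∧ m U < ⊤ ∧ 0 < m (A ∩ U)) :
    ∃ U : ℕ → Set X, (∀ i : ℕ, IsOpen (U i)) ∧ (∀ i : ℕ, m (U i) < ⊤) ∧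
      m (Set.univ \ ⋃ i : ℕ, U i) = 0 := by
  have := UniformSpace.secondCountable_of_separable X
  let S : Set (Set X) := {U | IsOpen U ∧ m U < ⊤}
  obtain ⟨T, hTc, hTS, hTU⟩ := TopologicalSpace.isOpen_sUnion_countable S fun _ h => h.1
  -- Inserting `∅` makes the family nonempty, so that it can be enumerated by `ℕ`.
  obtain ⟨U, hU⟩ := (hTc.insert ∅).exists_eq_range (insert_nonempty ∅ T)
  have hUS : ∀ i, U i ∈ S := fun i => by
    have hi : U i ∈ insert ∅ T := hU ▸ mem_range_self i
    rcases hi with h | h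
    · rw [h]
      exact ⟨isOpen_empty, by simp⟩
    · exact hTS h
  have hUn : ⋃ i, U i = ⋃₀ S := by
    rw [← sUnion_range, ← hU, sUnion_insert, empty_union, hTU]
  refine ⟨U, fun i => (hUS i).1, fun i => (hUS i).2, ?_⟩
  rw [hUn]
  by_contra hne
  obtain ⟨V, hVo, hVf, hV⟩ := helf (univ \ ⋃₀ S)
    (MeasurableSet.univ.diff (isOpen_sUnion fun _ h => h.1).measurableSet)
    (pos_iff_ne_zero.2 hne)
  have hdisj : (univ \ ⋃₀ S) ∩ V = ∅ :=
    eq_empty_of_forall_notMem fun x hx => hx.1.2 ⟨V, ⟨hVo, hVf⟩, hx.2⟩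
  simp [hdisj] at hV
end

section
/- Let (X, d) be a complete separable metric space and let m be a Borel measure on X that is effectively locally finite. Then there exists a closed set E ⊆ X with m(E) = 0 such that the restriction of m to the open set X \ E is locally finite, i.e. every point x ∈ X \ E has an open neighborhood U ⊆ X \ E with m(U) < ∞. -/
open MeasureTheory Set ENNReal

/-- For an effectively locally finite Borel measure on a complete
separable metric space, there is a closed m-null set E such that m is locally finite
on the open set X \ E. -/
theorem effectivelyLocallyFinite_locallyFinite_off_closed_null
    {X : Type*} [MetricSpace X] [CompleteSpace X]
    [TopologicalSpace.SeparableSpace X] [MeasurableSpace X] [BorelSpace X]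
    (m : Measure X)
    (helf : ∀ A : Set X, MeasurableSet A → 0 < m A →
      ∃ U : Set X, IsOpen U ∧ m U < ⊤ ∧ 0 < m (A ∩ U)) :
    ∃ E : Set X, IsClosed E ∧ m E = 0 ∧
      ∀ x ∈ Eᶜ, ∃ U : Set X, IsOpen U ∧ x ∈ U ∧ U ⊆ Eᶜ ∧ m U < ⊤ := by
  -- `E` is the complement of the union of all open sets of finite measure.
  have hsub : ∀ U : Set X, IsOpen U → m U < ⊤ → U ⊆ ⋃₀ {U : Set X | IsOpen U ∧ m U < ⊤} :=
    fun U hU hm => subset_sUnion_of_mem ⟨hU, hm⟩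
  have hopen : IsOpen (⋃₀ {U : Set X | IsOpen U ∧ m U < ⊤}) := isOpen_sUnion fun U hU => hU.1
  refine ⟨(⋃₀ {U : Set X | IsOpen U ∧ m U < ⊤})ᶜ, hopen.isClosed_compl, ?_, ?_⟩
  · by_contra hne
    obtain ⟨U, hU, hfin, hpos⟩ := helf _ hopen.measurableSet.compl (pos_iff_ne_zero.mpr hne)
    have hempty : (⋃₀ {U : Set X | IsOpen U ∧ m U < ⊤})ᶜ ∩ U = ∅ :=
      (disjoint_compl_left_iff_subset.mpr (hsub U hU hfin)).inter_eq
    simp [hempty] at hpos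
  · intro x hx
    rw [compl_compl] at hx ⊢
    obtain ⟨U, ⟨hU, hfin⟩, hxU⟩ := hx
    exact ⟨U, hU, hxU, hsub U hU hfin, hfin⟩
end

section
/- Let (X, Σ) be a measurable space, m a measure on Σ and μ a finite measure on Σ. Then μ is truly continuous with respect to m if and only if the following two conditions are satisfied: (i) μ is (ε-δ)-absolutely continuous with respect to m, and (ii) for every E ∈ Σ with μ(E) > 0 there exists F ∈ Σ such that m(F) < ∞ and μ(E ∩ F) > 0. -/
/-!
If `μ` is truly continuous, with witness `F` for `ε = μ E / 2`, then `μ (E \ F) ≤ μ E / 2`,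
since `E \ F` misses `F`; so `E ∩ F` has positive `μ`-measure.

Conversely, exhaustion with respect to the finite measure `μ` gives a set
`S = m.sigmaFiniteSetWRT μ` on which `m` is σ-finite and off which every set of positive
`μ`-measure has infinite `m`-measure. The finite-trace condition forces `μ Sᶜ = 0`, hence `μ` is carried,
up to arbitrarily small mass, by sets of finite `m`-measure
(`exists_finite_measure_compl_le`). (ε-δ)-absolute continuity takes care of the part of a set
lying inside such a carrier.
-/

open MeasureTheory Set ENNReal

/-- If every `μ`-nonnull set has a `μ`-nonnull trace on some set of finite `m`-measure, then all
but `ε` of the mass of `μ` lies on a single set of finite `m`-measure. -/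
lemma exists_finite_measure_compl_le
    {X : Type*} [MeasurableSpace X] (m μ : Measure X) [IsFiniteMeasure μ]
    (h : ∀ E : Set X, MeasurableSet E → 0 < μ E →
      ∃ F : Set X, MeasurableSet F ∧ m F < ⊤ ∧ 0 < μ (E ∩ F))
    {ε : ℝ≥0∞} (hε : 0 < ε) :
    ∃ E : Set X, MeasurableSet E ∧ m E < ⊤ ∧ μ Eᶜ ≤ ε := by
  set S := m.sigmaFiniteSetWRT μ with hS
  have hSm : MeasurableSet S := measurableSet_sigmaFiniteSetWRT
  have hS0 : μ Sᶜ = 0 := by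
    by_contra hne
    obtain ⟨F, -, hF, hpos⟩ := h Sᶜ hSm.compl (pos_iff_ne_zero.2 hne)
    have htop : m (Sᶜ ∩ F) = ⊤ :=
      measure_eq_top_of_subset_compl_sigmaFiniteSetWRT inter_subset_left hpos.ne'
    exact ((measure_mono inter_subset_right).trans_lt hF).ne htop
  let A := spanningSets (m.restrict S)
  have hA : ∀ n, MeasurableSet (A n) := measurableSet_spanningSets (m.restrict S)
  have hlim : Filter.Tendsto (fun n => μ (A n)ᶜ) Filter.atTop (nhds 0) := by
    have := tendsto_measure_iInter_atTop (μ := μ) (s := fun n => (A n)ᶜ)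
      (fun n => (hA n).compl.nullMeasurableSet)
      (fun i j hij => compl_subset_compl.2 (monotone_spanningSets (m.restrict S) hij))
      ⟨0, measure_ne_top _ _⟩
    rwa [← compl_iUnion, iUnion_spanningSets, compl_univ, measure_empty] at this
  obtain ⟨n, hn⟩ := (hlim.eventually_le_const hε).exists
  refine ⟨A n ∩ S, (hA n).inter hSm, ?_, ?_⟩
  · rw [← Measure.restrict_apply (hA n)]
    exact measure_spanningSets_lt_top (m.restrict S) n
  · rw [compl_inter]
    calc μ ((A n)ᶜ ∪ Sᶜ) ≤ μ (A n)ᶜ + μ Sᶜ := measure_union_le _ _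
      _ ≤ ε := by rwa [hS0, add_zero]

/-- A finite measure μ is truly continuous with respect to m if and only
if it is (ε-δ)-absolutely continuous with respect to m and every set of positive μ-measure
meets a set of finite m-measure in a set of positive μ-measure. -/
theorem trulyContinuous_iff
    {X : Type*} [MeasurableSpace X] (m μ : Measure X) [IsFiniteMeasure μ] :
    (∀ ε : ℝ≥0∞, 0 < ε → ∃ δ : ℝ≥0∞, 0 < δ ∧ ∃ E : Set X, MeasurableSet E ∧ m E < ⊤ ∧
        ∀ F : Set X, MeasurableSet F → m (E ∩ F) ≤ δ → μ F ≤ ε) ↔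
      ((∀ ε : ℝ≥0∞, 0 < ε → ∃ δ : ℝ≥0∞, 0 < δ ∧
          ∀ E : Set X, MeasurableSet E → m E ≤ δ → μ E ≤ ε) ∧
        (∀ E : Set X, MeasurableSet E → 0 < μ E →
          ∃ F : Set X, MeasurableSet F ∧ m F < ⊤ ∧ 0 < μ (E ∩ F))) := by
  constructor
  · intro h
    refine ⟨fun ε hε => ?_, fun E hE hpos => ?_⟩
    · obtain ⟨δ, hδ, E, -, -, H⟩ := h ε hε
      exact ⟨δ, hδ, fun F hF hm => H F hF ((measure_mono inter_subset_right).trans hm)⟩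
    · obtain ⟨δ, -, F, hF, hFm, H⟩ := h (μ E / 2) (ENNReal.half_pos hpos.ne')
      refine ⟨F, hF, hFm, pos_iff_ne_zero.2 fun h0 => ?_⟩
      have hle : μ (E \ F) ≤ μ E / 2 := H (E \ F) (hE.diff hF) (by simp)
      have heq := measure_inter_add_sdiff (μ := μ) E hF
      rw [h0, zero_add] at heq
      rw [heq] at hle
      exact absurd hle (ENNReal.half_lt_self hpos.ne' (measure_ne_top μ E)).not_ge
  · rintro ⟨hac, hfin⟩ ε hε
    have hε2 : 0 < ε / 2 := ENNReal.half_pos hε.ne'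
    obtain ⟨δ, hδ, H⟩ := hac (ε / 2) hε2
    obtain ⟨E, hE, hEm, hEc⟩ := exists_finite_measure_compl_le m μ hfin hε2
    refine ⟨δ, hδ, E, hE, hEm, fun F hF hm => ?_⟩
    calc μ F ≤ μ (E ∩ F) + μ Eᶜ := by
          refine (measure_mono fun x hx => ?_).trans (measure_union_le _ _)
          by_cases hxE : x ∈ E
          · exact Or.inl ⟨hxE, hx⟩
          · exact Or.inr hxE
      _ ≤ ε / 2 + ε / 2 := add_le_add (H _ (hE.inter hF) hm) hEc
      _ = ε := ENNReal.add_halves ε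
end

section
/- Let (X, d) be a complete separable metric space, m a Borel measure on X that is effectively locally finite, and μ a finite Borel measure on X that is (ε-δ)-absolutely continuous with respect to m. Then there exists a measurable function f : X → [0, ∞) such that μ(B) = ∫_B f dm for every Borel set B ⊆ X. -/
/-!
The space is second countable, so by the Lindelöf property the union `W` of all open sets of finite
`m`-measure is a union of countably many of them. The complement of `W` is `m`-null: otherwise
effective local finiteness yields an open set of finite measure meeting it, which is impossible
since that set lies in `W`. Hence `m` is σ-finite, and the classical Radon–Nikodym theorem
(`Measure.setLIntegral_rnDeriv`) applies, as (ε-δ)-absolute continuity implies `μ ≪ m`. The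
derivative is `m`-a.e. finite because `μ` is finite, so its image under `toNNReal` is a density.
-/

open MeasureTheory Set ENNReal NNReal

theorem sigmaFinite_of_effectivelyLocallyFinite
    {X : Type*} [TopologicalSpace X] [SecondCountableTopology X]
    [MeasurableSpace X] [BorelSpace X] (m : Measure X)
    (helf : ∀ A : Set X, MeasurableSet A → 0 < m A →
      ∃ U : Set X, IsOpen U ∧ m U < ⊤ ∧ 0 < m (A ∩ U)) :
    SigmaFinite m := by
  obtain ⟨T, hTc, hTS, hTU⟩ := TopologicalSpace.isOpen_sUnion_countable
    {U : Set X | IsOpen U ∧ m U < ⊤} (fun U hU => hU.1)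
  have hWopen : IsOpen (⋃₀ T) := isOpen_sUnion fun U hU => (hTS hU).1
  have hnull : m (⋃₀ T)ᶜ = 0 := by
    by_contra hne
    obtain ⟨U, hUo, hUfin, hUpos⟩ :=
      helf _ hWopen.measurableSet.compl (pos_iff_ne_zero.mpr hne)
    have hsub : U ⊆ ⋃₀ T := hTU ▸ subset_sUnion_of_mem ⟨hUo, hUfin⟩
    have hempty : (⋃₀ T)ᶜ ∩ U = ∅ := (disjoint_compl_left_iff_subset.mpr hsub).inter_eq
    simp [hempty] at hUpos
  refine Measure.sigmaFinite_of_countable (S := insert (⋃₀ T)ᶜ T) (hTc.insert _) ?_ ?_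
  · rintro U (rfl | hU)
    · simp [hnull]
    · exact (hTS hU).2
  · rw [sUnion_insert, compl_union_self]

/-- **Radon–Nikodym theorem for quasi-Radon reference measures.**
If m is an effectively locally finite Borel measure on a complete separable metric space
and μ is a finite Borel measure which is (ε-δ)-absolutely continuous with respect to m,
then μ has a density with respect to m. -/
theorem radonNikodym_of_effectivelyLocallyFinite
    {X : Type*} [MetricSpace X] [CompleteSpace X]
    [TopologicalSpace.SeparableSpace X] [MeasurableSpace X] [BorelSpace X]
    (m μ : Measure X) [IsFiniteMeasure μ]
    (helf : ∀ A : Set X, MeasurableSet A → 0 < m A →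
      ∃ U : Set X, IsOpen U ∧ m U < ⊤ ∧ 0 < m (A ∩ U))
    (hac : ∀ ε : ℝ≥0∞, 0 < ε → ∃ δ : ℝ≥0∞, 0 < δ ∧
      ∀ E : Set X, MeasurableSet E → m E ≤ δ → μ E ≤ ε) :
    ∃ f : X → ℝ≥0, Measurable f ∧
      ∀ B : Set X, MeasurableSet B → μ B = ∫⁻ x in B, (f x : ℝ≥0∞) ∂m := by
  have : SecondCountableTopology X := UniformSpace.secondCountable_of_separable X
  have : SigmaFinite m := sigmaFinite_of_effectivelyLocallyFinite m helf
  have hμm : μ ≪ m := by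
    refine Measure.AbsolutelyContinuous.mk fun E hE h0 => ?_
    refine le_antisymm (le_of_forall_gt_imp_ge_of_dense fun ε hε => ?_) (zero_le)
    obtain ⟨δ, _, h⟩ := hac ε hε
    exact h E hE (by simp [h0])
  refine ⟨fun x => (μ.rnDeriv m x).toNNReal, (Measure.measurable_rnDeriv μ m).ennreal_toNNReal,
    fun B hB => ?_⟩
  rw [← Measure.setLIntegral_rnDeriv hμm B]
  refine lintegral_congr_ae (ae_restrict_of_ae ?_)
  filter_upwards [Measure.rnDeriv_lt_top μ m] with x hx
  exact (ENNReal.coe_toNNReal hx.ne).symm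
end

section
/- Let (X, d) be a complete separable metric space and S ⊆ X a closed set with empty interior. Let μ and ν be Borel measures on X that are effectively locally finite, satisfy μ(S) = ν(S) = 0, and are such that μ(A) < ∞ and ν(A) < ∞ for every bounded Borel set A ⊆ X whose distance to S is strictly positive. If ∫ f dμ = ∫ f dν for every bounded continuous function f : X → ℝ with bounded support that vanishes on some open neighborhood of S, then μ = ν. -/
/-!
The open sets `V n = {x | dist x x₀ < n, dist(x, S) > 1/(n+1)}` cover `Sᶜ` and have finite measure
under both `μ` and `ν`. Fix a continuous weight `h ≤ 1` that is nonzero exactly on `V n`. For every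
bounded continuous `f ≥ 0` the product `f * h` is an admissible test function, so the finite
measures `h μ` and `h ν` have the same integrals of bounded continuous functions and hence are
equal. Dividing by `h` on `V n` shows that `μ` and `ν` agree on `V n`
(`restrict_eq_of_isOpen_of_integral_eq`), and gluing over `n` gives `μ = ν` on `Sᶜ`, while both
measures vanish on `S`.
-/

open MeasureTheory Set ENNReal NNReal

/-- If all nonnegative bounded continuous functions supported in the open set `V` have the same
integral for `μ` and `ν`, and `V` has finite measure for both, then `μ` and `ν` agree on `V`. -/
theorem restrict_eq_of_isOpen_of_integral_eq {X : Type*} [MetricSpace X] [MeasurableSpace X]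
    [BorelSpace X] {μ ν : Measure X} {V : Set X} (hV : IsOpen V) (hμV : μ V < ⊤) (hνV : ν V < ⊤)
    (hint : ∀ f : X → ℝ, Continuous f → (∀ x, 0 ≤ f x) → (∃ C : ℝ, ∀ x, |f x| ≤ C) →
      Function.support f ⊆ V → ∫ x, f x ∂μ = ∫ x, f x ∂ν) :
    μ.restrict V = ν.restrict V := by
  -- The minimum with `1` makes the weight finite, also when `V = univ` and the distance is `⊤`.
  let e : X → ℝ≥0∞ := fun x => min 1 (Metric.infEDist x Vᶜ)
  have he_cont : Continuous e := continuous_const.min Metric.continuous_infEDist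
  have he_le : ∀ x, e x ≤ 1 := fun x => min_le_left _ _
  have he_top : ∀ x, e x ≠ ⊤ := fun x => ((he_le x).trans_lt one_lt_top).ne
  have he_zero : ∀ x, e x = 0 ↔ x ∉ V := fun x => by
    have h : Metric.infEDist x Vᶜ = 0 ↔ x ∉ V :=
      (Metric.mem_iff_infEDist_zero_of_closed hV.isClosed_compl).symm
    rw [← h]
    simp [e, ← nonpos_iff_eq_zero]
  have he_lint : ∀ m : Measure X, m V < ⊤ → ∀ c : ℝ≥0, ∫⁻ x, c * e x ∂m < ⊤ := by
    intro m hm c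
    calc ∫⁻ x, c * e x ∂m ≤ ∫⁻ x, V.indicator (fun _ => (c : ℝ≥0∞)) x ∂m := by
          refine lintegral_mono fun x => ?_
          by_cases hx : x ∈ V
          · simpa [hx] using mul_le_mul_right (he_le x) (c : ℝ≥0∞)
          · simp [hx, (he_zero x).2 hx]
      _ = c * m V := lintegral_indicator_const hV.measurableSet _
      _ < ⊤ := mul_lt_top coe_lt_top hm
  have hfin : ∀ m : Measure X, m V < ⊤ → IsFiniteMeasure (m.withDensity e) := fun m hm =>
    isFiniteMeasure_withDensity (by simpa using (he_lint m hm 1).ne)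
  have := hfin μ hμV
  have := hfin ν hνV
  have hwd : μ.withDensity e = ν.withDensity e := by
    refine ext_of_forall_lintegral_eq_of_IsFiniteMeasure fun f => ?_
    obtain ⟨C, hC⟩ : ∃ C : ℝ≥0, ∀ x, f x ≤ C := ⟨nndist f 0, fun x => BoundedContinuousFunction.NNReal.upper_bound f x⟩
    have hf_meas : Measurable fun x => (f x : ℝ≥0∞) := f.continuous.measurable.coe_nnreal_ennreal
    rw [lintegral_withDensity_eq_lintegral_mul _ he_cont.measurable hf_meas,
      lintegral_withDensity_eq_lintegral_mul _ he_cont.measurable hf_meas]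
    have hg_le : ∀ x, (e * fun x => (f x : ℝ≥0∞)) x ≤ C * e x := fun x => by
      rw [Pi.mul_apply, mul_comm]
      exact mul_le_mul_left (ENNReal.coe_le_coe.2 (hC x)) _
    have hg_top : ∀ x, (e * fun x => (f x : ℝ≥0∞)) x ≠ ⊤ := fun x =>
      mul_ne_top (he_top x) coe_ne_top
    have hg_lint : ∀ m : Measure X, m V < ⊤ → ∫⁻ x, (e * fun x => (f x : ℝ≥0∞)) x ∂m ≠ ⊤ :=
      fun m hm => ((lintegral_mono hg_le).trans_lt (he_lint m hm C)).ne
    have hg_meas : Measurable (e * fun x => (f x : ℝ≥0∞)) := he_cont.measurable.mul hf_meas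
    have key : ∫ x, (e x).toReal * (f x : ℝ) ∂μ = ∫ x, (e x).toReal * (f x : ℝ) ∂ν := by
      refine hint _ ?_ (fun x => by positivity) ⟨C, fun x => ?_⟩ fun x hx => ?_
      · refine Continuous.mul ?_ (NNReal.continuous_coe.comp f.continuous)
        exact continuousOn_toReal.comp_continuous he_cont he_top
      · rw [abs_of_nonneg (by positivity)]
        have h1 : (e x).toReal ≤ 1 := toReal_le_of_le_ofReal zero_le_one (by simpa using he_le x)
        have h2 : (f x : ℝ) ≤ C := NNReal.coe_le_coe.2 (hC x)
        calc (e x).toReal * (f x : ℝ) ≤ 1 * C := by gcongr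
          _ = C := one_mul _
      · by_contra hxV
        simp [(he_zero x).2 hxV] at hx
    have hto : ∀ m : Measure X, ∫ x, (e x).toReal * (f x : ℝ) ∂m =
        (∫⁻ x, (e * fun x => (f x : ℝ≥0∞)) x ∂m).toReal := fun m => by
      rw [← integral_toReal hg_meas.aemeasurable
        (Filter.Eventually.of_forall fun x => (hg_top x).lt_top)]
      simp
    rw [hto, hto] at key
    exact (toReal_eq_toReal_iff' (hg_lint μ hμV) (hg_lint ν hνV)).1 key
  have hinv : ∀ m : Measure X,
      ((m.withDensity e).restrict V).withDensity e⁻¹ = m.restrict V := fun m => by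
    rw [restrict_withDensity hV.measurableSet]
    refine withDensity_inv_same he_cont.measurable ?_ (Filter.Eventually.of_forall he_top)
    filter_upwards [ae_restrict_mem hV.measurableSet] with x hx
    exact fun h => (he_zero x).1 h hx
  rw [← hinv μ, ← hinv ν, hwd]

/-- Two effectively locally finite Borel measures on a complete
separable metric space, vanishing on a closed set S with empty interior, finite on
bounded sets lying at positive distance from S, which agree against all bounded
continuous functions with bounded support vanishing on a neighborhood of S, coincide. -/
theorem measure_eq_of_integral_eq_on_CbsS
    {X : Type*} [MetricSpace X] [CompleteSpace X]
    [TopologicalSpace.SeparableSpace X] [MeasurableSpace X] [BorelSpace X]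
    (S : Set X) (hS : IsClosed S) (hSint : interior S = ∅)
    (μ ν : Measure X)
    (hμelf : ∀ A : Set X, MeasurableSet A → 0 < μ A →
      ∃ U : Set X, IsOpen U ∧ μ U < ⊤ ∧ 0 < μ (A ∩ U))
    (hνelf : ∀ A : Set X, MeasurableSet A → 0 < ν A →
      ∃ U : Set X, IsOpen U ∧ ν U < ⊤ ∧ 0 < ν (A ∩ U))
    (hμS : μ S = 0) (hνS : ν S = 0)
    (hμfin : ∀ A : Set X, MeasurableSet A → Bornology.IsBounded A →
      (∃ ε : ℝ, 0 < ε ∧ ∀ a ∈ A, ∀ s ∈ S, ε ≤ dist a s) → μ A < ⊤)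
    (hνfin : ∀ A : Set X, MeasurableSet A → Bornology.IsBounded A →
      (∃ ε : ℝ, 0 < ε ∧ ∀ a ∈ A, ∀ s ∈ S, ε ≤ dist a s) → ν A < ⊤)
    (hint : ∀ f : X → ℝ, Continuous f → (∃ C : ℝ, ∀ x, |f x| ≤ C) →
      Bornology.IsBounded (Function.support f) →
      (∃ U : Set X, IsOpen U ∧ S ⊆ U ∧ ∀ x ∈ U, f x = 0) →
      ∫ x, f x ∂μ = ∫ x, f x ∂ν) :
    μ = ν := by
  rcases isEmpty_or_nonempty X with hX | ⟨⟨x₀⟩⟩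
  · exact Measure.eq_zero_of_isEmpty μ |>.trans (Measure.eq_zero_of_isEmpty ν).symm
  -- The extended distance is `⊤` when `S` is empty, so that `V` then exhausts the whole space.
  let V : ℕ → Set X := fun n =>
    Metric.ball x₀ n ∩ {x | ((n : ℝ≥0∞) + 1)⁻¹ < Metric.infEDist x S}
  have hVopen : ∀ n, IsOpen (V n) := fun n =>
    Metric.isOpen_ball.inter (isOpen_lt continuous_const Metric.continuous_infEDist)
  have hVbdd : ∀ n, Bornology.IsBounded (V n) := fun n =>
    Metric.isBounded_ball.subset inter_subset_left
  have hVdist : ∀ n, ∃ ε : ℝ, 0 < ε ∧ ∀ a ∈ V n, ∀ s ∈ S, ε ≤ dist a s := by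
    intro n
    refine ⟨((n : ℝ) + 1)⁻¹, by positivity, fun a ha s hs => ?_⟩
    have h : ((n : ℝ≥0∞) + 1)⁻¹ ≤ edist a s := ha.2.le.trans (Metric.infEDist_le_edist_of_mem hs)
    have h' := toReal_mono (edist_ne_top a s) h
    rw [← dist_edist, toReal_inv, toReal_add (natCast_ne_top n) one_ne_top] at h'
    simpa using h'
  have hVunion : ⋃ n, V n = Sᶜ := by
    ext x
    simp only [mem_iUnion, mem_compl_iff]
    constructor
    · rintro ⟨n, hn⟩ hx
      have h := hn.2
      simp [Metric.infEDist_zero_of_mem hx] at h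
    · intro hx
      have hpos : Metric.infEDist x S ≠ 0 := fun h =>
        hx ((Metric.mem_iff_infEDist_zero_of_closed hS).2 h)
      obtain ⟨n, hn⟩ := exists_inv_nat_lt hpos
      obtain ⟨k, hk⟩ := exists_nat_gt (dist x x₀)
      refine ⟨max n k, ?_, ?_⟩
      · rw [Metric.mem_ball]
        exact hk.trans_le (by exact_mod_cast le_max_right n k)
      · refine lt_of_le_of_lt (ENNReal.inv_le_inv.2 ?_) hn
        exact_mod_cast (le_max_left n k).trans (Nat.le_succ _)
  have hrestrict : ∀ n, μ.restrict (V n) = ν.restrict (V n) := by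
    intro n
    refine restrict_eq_of_isOpen_of_integral_eq (hVopen n)
      (hμfin _ (hVopen n).measurableSet (hVbdd n) (hVdist n))
      (hνfin _ (hVopen n).measurableSet (hVbdd n) (hVdist n)) fun f hf _ hfb hfV => ?_
    refine hint f hf hfb ((hVbdd n).subset hfV)
      ⟨{x | Metric.infEDist x S < ((n : ℝ≥0∞) + 1)⁻¹},
        isOpen_lt Metric.continuous_infEDist continuous_const, fun s hs => ?_, fun x hx => ?_⟩
    · simp [Metric.infEDist_zero_of_mem hs]
    · by_contra hne
      exact lt_asymm (mem_ofPred.1 hx) (mem_ofPred.1 (hfV hne).2)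
  have hcompl : μ.restrict Sᶜ = ν.restrict Sᶜ := by
    rw [← hVunion]
    exact Measure.restrict_iUnion_congr.2 hrestrict
  have hself : ∀ m : Measure X, m S = 0 → m.restrict Sᶜ = m := fun m hm =>
    Measure.restrict_eq_self_of_ae_mem (measure_eq_zero_iff_ae_notMem.1 hm)
  rwa [hself μ hμS, hself ν hνS] at hcompl
end

section
/- Let (X, d) be a complete separable metric space, N < 0, and let {ν_n}_{n ∈ ℕ} and {μ_n}_{n ∈ ℕ} be sequences of Borel probability measures on X such that the family {ν_n} is tight, each μ_n is absolutely continuous with respect to ν_n with density ρ_n, and sup_{n ∈ ℕ} ∫ ρ_n^{1 − 1/N} dν_n < ∞. Then the family {μ_n}_{n ∈ ℕ} is tight. -/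
/-! With `p = 1 - 1/N > 1` and `q` its conjugate exponent, Hölder's inequality on `Kᶜ` gives
`μ n Kᶜ ≤ (∫ ρ_n ^ p ∂ν_n) ^ (1/p) * (ν n Kᶜ) ^ (1/q)`. The first factor is bounded uniformly
in `n`, so a compact set `K` outside of which all `ν n` are small works for all `μ n`. -/

open MeasureTheory Set ENNReal NNReal Filter

/-- If {ν_n} is a tight sequence of Borel probability measures on a
complete separable metric space, μ_n = ρ_n · ν_n, and the Rényi entropies
∫ ρ_n^{1-1/N} dν_n (with N < 0) are uniformly bounded, then {μ_n} is tight. -/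
theorem tight_of_renyiEntropy_bounded
    {X : Type*} [MetricSpace X] [CompleteSpace X]
    [TopologicalSpace.SeparableSpace X] [MeasurableSpace X] [BorelSpace X]
    (N : ℝ) (hN : N < 0)
    (ν μ : ℕ → Measure X)
    (hνprob : ∀ n, IsProbabilityMeasure (ν n))
    (hμprob : ∀ n, IsProbabilityMeasure (μ n))
    (ρ : ℕ → X → ℝ≥0) (hρ : ∀ n, Measurable (ρ n))
    (hμ : ∀ n, μ n = (ν n).withDensity (fun x => (ρ n x : ℝ≥0∞)))
    (hνtight : ∀ ε : ℝ≥0∞, 0 < ε → ∃ K : Set X, IsCompact K ∧ ∀ n, ν n Kᶜ ≤ ε)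
    (hent : (⨆ n, ∫⁻ x, (ρ n x : ℝ≥0∞) ^ (1 - 1 / N) ∂(ν n)) < ⊤) :
    ∀ ε : ℝ≥0∞, 0 < ε → ∃ K : Set X, IsCompact K ∧ ∀ n, μ n Kᶜ ≤ ε := by
  intro ε hε
  set p : ℝ := 1 - 1 / N with hp
  have hp1 : 1 < p := by
    have : 1 / N < 0 := one_div_neg.mpr hN
    linarith
  have hpq := Real.HolderConjugate.conjExponent hp1
  set q := p.conjExponent
  set C : ℝ≥0∞ := ⨆ n, ∫⁻ x, (ρ n x : ℝ≥0∞) ^ p ∂(ν n)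
  have hC : C ^ (1 / p) ≠ ⊤ := ENNReal.rpow_ne_top_of_nonneg hpq.one_div_nonneg hent.ne
  have hε' : 0 < ε / C ^ (1 / p) := ENNReal.div_pos hε.ne' hC
  -- This tolerance is the solution `δ` of `C ^ (1/p) * δ ^ (1/q) = ε`.
  obtain ⟨K, hK, hνK⟩ := hνtight ((ε / C ^ (1 / p)) ^ q)
    (ENNReal.rpow_pos_of_nonneg hε' hpq.symm.nonneg)
  refine ⟨K, hK, fun n => ?_⟩
  have hölder := ENNReal.lintegral_mul_le_Lp_mul_Lq ((ν n).restrict Kᶜ) hpq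
    (hρ n).coe_nnreal_ennreal.aemeasurable (aemeasurable_const (b := (1 : ℝ≥0∞)))
  simp only [Pi.mul_apply, mul_one, ENNReal.one_rpow, lintegral_const, one_mul,
    Measure.restrict_apply_univ] at hölder
  calc μ n Kᶜ = ∫⁻ x in Kᶜ, (ρ n x : ℝ≥0∞) ∂(ν n) := by
        rw [hμ n, withDensity_apply _ hK.measurableSet.compl]
    _ ≤ (∫⁻ x in Kᶜ, (ρ n x : ℝ≥0∞) ^ p ∂(ν n)) ^ (1 / p) * (ν n Kᶜ) ^ (1 / q) := hölder
    _ ≤ C ^ (1 / p) * ((ε / C ^ (1 / p)) ^ q) ^ (1 / q) := by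
        refine mul_le_mul' (ENNReal.rpow_le_rpow ?_ hpq.one_div_nonneg)
          (ENNReal.rpow_le_rpow (hνK n) hpq.symm.one_div_nonneg)
        exact (setLIntegral_le_lintegral _ _).trans
            (le_iSup (fun n => ∫⁻ x, (ρ n x : ℝ≥0∞) ^ p ∂(ν n)) n)
    _ = C ^ (1 / p) * (ε / C ^ (1 / p)) := by
        rw [← ENNReal.rpow_mul, mul_one_div_cancel hpq.symm.ne_zero, ENNReal.rpow_one]
    _ ≤ ε := ENNReal.mul_div_le
end

section
/- Let (X, d) be a complete separable metric space with a distinguished point p ∈ X, let S ⊆ X be a closed set with empty interior, and let N < 0. For k ∈ ℕ set R^k := {x ∈ X : d(x, p) ≤ 2^{k+1} and d(x, S) ≥ 2^{−(k+1)}} (with d(x, ∅) = +∞). Let m be a Borel measure on X with m(S) = 0 and m(R^k) < ∞ for every k ∈ ℕ, and let μ be a Borel probability measure on X with μ(S) = 0. Let f*(y) := sup_{x ∈ ℝ} (x·y − |x|^{1 − 1/N}) denote the convex conjugate of x ↦ |x|^{1−1/N}. Then S_{N,m}(μ) = sup{ ∫ F dμ − ∫ f*(F) dm : F : X → ℝ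 bounded continuous with support contained in R^k for some k ∈ ℕ }. -/
/-!
Write `q = 1 - 1/N > 1`, `f x = |x|^q`, with convex conjugate `f*`.

If `μ = ρ m`, the Fenchel inequality `ρ F ≤ f ρ + f* F` integrates to
`∫ F dμ - ∫ f*(F) dm ≤ ∫ ρ^q dm` for every admissible `F`, so the supremum is at most the entropy.

Conversely, let the supremum `A` be finite. Any bounded measurable `G` vanishing off `R^k` is an
almost everywhere limit, for both `μ` and `m`, of uniformly bounded continuous functions supported
in `R^{k+1}` (`exists_approx`); since `m` is finite on `R^{k+1}` and `f*` is continuous, dominated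
convergence gives `∫ G dμ - ∫ f*(G) dm ≤ A` for such `G` as well (`measurable_bound`). Taking
`G = t · 1_{E ∩ R^k}` with `m E = 0` and `t → ∞` shows `μ ≪ m` (`absolutelyContinuous`). As `m` is
σ-finite, `μ` has a density `ρ`. Taking `G = f'(r)` with `r = 1_{R^n} min(ρ, n)` and using
`f*(f'(r)) = r f'(r) - f(r)`, the left-hand side is at least `∫ r^q dm`; monotone convergence in `n`
gives `∫ ρ^q dm ≤ A`. The truncations exhaust `ρ` almost everywhere because the `R^k` cover the
complement of `S`.
-/

open MeasureTheory Set ENNReal NNReal Filter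

open Classical in
/-- The Rényi entropy `S_{N,m}(μ)` for `N < 0`: it equals `∫ ρ^{1-1/N} dm` if `μ = ρ·m`
is absolutely continuous with respect to `m` with density `ρ`, and `+∞` otherwise. -/
noncomputable def renyiEntropy {X : Type*} [MeasurableSpace X]
    (N : ℝ) (m μ : Measure X) : ℝ≥0∞ :=
  if h : ∃ ρ : X → ℝ≥0∞, Measurable ρ ∧ μ = m.withDensity ρ
  then ∫⁻ x, (h.choose x) ^ (1 - 1 / N) ∂m
  else ⊤

/-- The convex conjugate `f*(y) = sup_{x ∈ ℝ} (x·y − |x|^{1 - 1/N})` of the convex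
function `x ↦ |x|^{1-1/N}` (for `N < 0`). -/
noncomputable def legendreConj (N y : ℝ) : ℝ :=
  ⨆ x : ℝ, (x * y - |x| ^ (1 - 1 / N))

/-- The `k`-th regular set `R^k = {x : d(x,p) ≤ 2^{k+1}, d(x,S) ≥ 2^{-(k+1)}}`
(with the convention `d(x,∅) = +∞`). -/
def regSet {X : Type*} [MetricSpace X] (p : X) (S : Set X) (k : ℕ) : Set X :=
  {x : X | dist x p ≤ 2 ^ (k + 1) ∧ ∀ s ∈ S, (2 : ℝ) ^ (-(k + 1 : ℤ)) ≤ dist x s}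

/-! ### The conjugate of `|x|^q` -/

/-- The graph of `x ↦ x^q` on `[0, ∞)` lies above its tangent line at `r`. -/
theorem tangent {q : ℝ} (hq : 1 < q) {r x : ℝ} (hr : 0 ≤ r) (hx : 0 ≤ x) :
    x * (q * r ^ (q - 1)) - x ^ q ≤ (q - 1) * r ^ q := by
  rcases hr.eq_or_lt with rfl | hr
  · rw [Real.zero_rpow (by linarith), Real.zero_rpow (by linarith)]
    have := Real.rpow_nonneg hx q
    linarith
  · have h := one_add_mul_self_le_rpow_one_add (s := x / r - 1)
      (by have := div_nonneg hx hr.le; linarith) hq.le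
    rw [add_sub_cancel, Real.div_rpow hx hr.le, le_div_iff₀ (by positivity)] at h
    have e : r ^ q = r ^ (q - 1) * r := by
      rw [Real.rpow_sub_one hr.ne']; field_simp
    have : (1 + q * (x / r - 1)) * r ^ q = (1 - q) * r ^ q + x * (q * r ^ (q - 1)) := by
      rw [e]; field_simp; ring
    linarith

theorem one_lt_expo {N : ℝ} (hN : N < 0) : 1 < 1 - 1 / N := by
  have := one_div_neg.2 hN
  linarith

/-- Closed form of the conjugate, and boundedness of the family defining it: without the latter,
the real supremum in `legendreConj` could be a junk value. -/
theorem legendreConj_eq {N : ℝ} (hN : N < 0) (y : ℝ) :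
    legendreConj N y =
      (1 - 1 / N - 1) * (|y| / (1 - 1 / N)) ^ ((1 - 1 / N) / (1 - 1 / N - 1)) ∧
    BddAbove (range fun x : ℝ => x * y - |x| ^ (1 - 1 / N)) := by
  have hq := one_lt_expo hN
  unfold legendreConj
  generalize 1 - 1 / N = q at hq ⊢
  have hq1 : q - 1 ≠ 0 := by linarith
  have h0 : 0 ≤ |y| / q := by positivity
  set r := (|y| / q) ^ (1 / (q - 1)) with hr
  have hr0 : 0 ≤ r := by positivity
  -- `r` is the point of `[0, ∞)` with `f' r = |y|`
  have e1 : q * r ^ (q - 1) = |y| := by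
    rw [hr, ← Real.rpow_mul h0, one_div_mul_cancel hq1, Real.rpow_one]
    field_simp
  have e2 : r ^ q = (|y| / q) ^ (q / (q - 1)) := by
    rw [hr, ← Real.rpow_mul h0]; congr 1; ring
  rw [← e2]
  have hub : ∀ x : ℝ, x * y - |x| ^ q ≤ (q - 1) * r ^ q := fun x => by
    have := tangent hq hr0 (abs_nonneg x)
    rw [e1, ← abs_mul] at this
    linarith [le_abs_self (x * y)]
  have hb : BddAbove (range fun x : ℝ => x * y - |x| ^ q) :=
    ⟨_, by rintro _ ⟨x, rfl⟩; exact hub x⟩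
  refine ⟨le_antisymm (ciSup_le hub) ?_, hb⟩
  -- the supremum is attained at the point `x` with `f' x = y`
  obtain ⟨x, hx, hxy⟩ : ∃ x : ℝ, |x| = r ∧ x * y = r * |y| := by
    rcases le_total 0 y with h | h
    · exact ⟨r, abs_of_nonneg hr0, by rw [abs_of_nonneg h]⟩
    · exact ⟨-r, by rw [abs_neg, abs_of_nonneg hr0], by rw [abs_of_nonpos h]; ring⟩
  refine le_trans (le_of_eq ?_) (le_ciSup hb x)
  simp only [hx, hxy]
  rw [← e1]
  have : r * r ^ (q - 1) = r ^ q := by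
    rcases hr0.eq_or_lt with h | h
    · rw [← h, zero_mul, Real.zero_rpow (by linarith)]
    · rw [Real.rpow_sub_one h.ne']; field_simp
  linear_combination (-q) * this

/-- Fenchel's inequality. -/
theorem fenchel {N : ℝ} (hN : N < 0) (x y : ℝ) :
    x * y ≤ |x| ^ (1 - 1 / N) + legendreConj N y := by
  have := le_ciSup (legendreConj_eq hN y).2 x
  unfold legendreConj
  linarith

theorem legendreConj_continuous {N : ℝ} (hN : N < 0) : Continuous (legendreConj N) := by
  have hq := one_lt_expo hN
  rw [funext fun y => (legendreConj_eq hN y).1]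
  generalize 1 - 1 / N = q at hq ⊢
  exact continuous_const.mul ((by fun_prop : Continuous fun y : ℝ => |y| / q).rpow_const
    fun _ => Or.inr (div_nonneg (by linarith) (by linarith)))

theorem legendreConj_zero {N : ℝ} (hN : N < 0) : legendreConj N 0 = 0 := by
  have hq := one_lt_expo hN
  rw [(legendreConj_eq hN 0).1]
  generalize 1 - 1 / N = q at hq ⊢
  rw [abs_zero, zero_div, Real.zero_rpow (div_pos (by linarith) (by linarith)).ne', mul_zero]

theorem legendreConj_nonneg {N : ℝ} (hN : N < 0) (y : ℝ) : 0 ≤ legendreConj N y := by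
  have hq := one_lt_expo hN
  rw [(legendreConj_eq hN y).1]
  exact mul_nonneg (by linarith) (Real.rpow_nonneg (div_nonneg (abs_nonneg _) (by linarith)) _)

theorem legendreConj_mono {N : ℝ} (hN : N < 0) {y C : ℝ} (h : |y| ≤ C) :
    legendreConj N y ≤ legendreConj N C := by
  have hq := one_lt_expo hN
  rw [(legendreConj_eq hN y).1, (legendreConj_eq hN C).1]
  generalize 1 - 1 / N = q at hq ⊢
  have hC : |y| ≤ |C| := h.trans (le_abs_self C)
  have : 0 ≤ q / (q - 1) := div_nonneg (by linarith) (by linarith)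
  have : 0 ≤ q - 1 := by linarith
  gcongr

/-- The half `f*(f'(r)) ≤ r f'(r) - f(r)` of the equality case of Fenchel's inequality. -/
theorem legendreConj_deriv {N : ℝ} (hN : N < 0) {r : ℝ} (hr : 0 ≤ r) :
    legendreConj N ((1 - 1 / N) * r ^ (1 - 1 / N - 1)) ≤
      (1 - 1 / N - 1) * r ^ (1 - 1 / N) := by
  have hq := one_lt_expo hN
  refine ciSup_le fun x => ?_
  have := tangent hq hr (abs_nonneg x)
  have h2 : x * ((1 - 1 / N) * r ^ (1 - 1 / N - 1)) ≤
      |x| * ((1 - 1 / N) * r ^ (1 - 1 / N - 1)) :=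
    mul_le_mul_of_nonneg_right (le_abs_self x)
      (mul_nonneg (by linarith) (Real.rpow_nonneg hr _))
  linarith

/-! ### The sets `R^k` -/

section RegSet
variable {X : Type*} [MetricSpace X] (p : X) (S : Set X)

theorem regSet_isClosed (k : ℕ) : IsClosed (regSet p S k) := by
  have : regSet p S k = {x | dist x p ≤ 2 ^ (k + 1)} ∩
      ⋂ s ∈ S, {x | (2 : ℝ) ^ (-(k + 1 : ℤ)) ≤ dist x s} := by
    ext x; simp [regSet]
  rw [this]
  exact (isClosed_le (by fun_prop) (by fun_prop)).inter
    (isClosed_biInter fun s _ => isClosed_le (by fun_prop) (by fun_prop))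

theorem regSet_subset_interior (k : ℕ) : regSet p S k ⊆ interior (regSet p S (k + 1)) := by
  intro x hx
  rw [mem_interior_iff_mem_nhds, Metric.mem_nhds_iff]
  have e : (2 : ℝ) ^ (-(k + 1 : ℤ)) = 2 * 2 ^ (-((k + 1 : ℕ) + 1 : ℤ)) := by
    rw [← zpow_one_add₀ two_ne_zero]; congr 1
  have hpos : (0 : ℝ) < 2 ^ (-((k + 1 : ℕ) + 1 : ℤ)) := by positivity
  have hle : (2 : ℝ) ^ (-((k + 1 : ℕ) + 1 : ℤ)) ≤ 1 :=
    zpow_le_one_of_nonpos₀ one_le_two (by omega)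
  have h1 : (1 : ℝ) ≤ 2 ^ (k + 1) := one_le_pow₀ one_le_two
  refine ⟨2 ^ (-((k + 1 : ℕ) + 1 : ℤ)), hpos, fun y hy => ⟨?_, fun s hs => ?_⟩⟩
  · have := dist_triangle y x p
    have := hx.1
    have := Metric.mem_ball.1 hy
    rw [pow_succ (2 : ℝ) (k + 1)]
    linarith
  · have := dist_triangle_left x s y
    have := hx.2 s hs
    have := Metric.mem_ball.1 hy
    linarith

theorem regSet_mono : Monotone (regSet p S) :=
  monotone_nat_of_le_succ fun k => (regSet_subset_interior p S k).trans interior_subset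

theorem exists_mem_regSet {S : Set X} (hS : IsClosed S) {x : X} (hx : x ∉ S) :
    ∃ k, x ∈ regSet p S k := by
  obtain ⟨ε, hε, h⟩ := Metric.isOpen_iff.1 hS.isOpen_compl x hx
  have t1 : Tendsto (fun k : ℕ => (2 : ℝ) ^ (k + 1)) atTop atTop :=
    (tendsto_pow_atTop_atTop_of_one_lt (one_lt_two (α := ℝ))).comp (tendsto_add_atTop_nat 1)
  have t2 := Filter.Tendsto.inv_tendsto_atTop t1
  obtain ⟨k, hk1, hk2⟩ := ((t1.eventually_ge_atTop (dist x p)).and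
    (t2.eventually_lt_const hε)).exists
  refine ⟨k, hk1, fun s hs => ?_⟩
  by_contra! hlt
  refine h (Metric.mem_ball'.2 (hlt.trans_le (le_of_eq_of_le ?_ hk2.le))) hs
  rw [zpow_neg]; norm_cast

end RegSet

/-! ### From continuous to measurable test functions -/

section Approx
variable {X : Type*} [MetricSpace X] [MeasurableSpace X] [BorelSpace X]

/-- Density of bounded continuous functions in `L¹(μ + m|_{R^{k+1}})` gives, along a subsequence,
almost everywhere convergence; clamping to `[-C, C]` and multiplying by an Urysohn cutoff, equal to
`1` on `R^k` and supported in `R^{k+1}`, preserves it. -/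
theorem exists_approx (p : X) (S : Set X) (m μ : Measure X) [IsFiniteMeasure μ]
    (hmR : ∀ k : ℕ, m (regSet p S k) < ⊤) {G : X → ℝ} (hG : Measurable G) {C : ℝ}
    (hC : ∀ x, |G x| ≤ C) {k : ℕ} (hk : Function.support G ⊆ regSet p S k) :
    ∃ F : ℕ → X → ℝ, (∀ n, Continuous (F n)) ∧ (∀ n x, |F n x| ≤ C) ∧
      (∀ n, Function.support (F n) ⊆ regSet p S (k + 1)) ∧
      (∀ᵐ x ∂μ, Tendsto (fun n => F n x) atTop (nhds (G x))) ∧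
      (∀ᵐ x ∂m, Tendsto (fun n => F n x) atTop (nhds (G x))) := by
  have hRm := (regSet_isClosed p S (k + 1)).measurableSet
  set ν := μ + m.restrict (regSet p S (k + 1)) with hν
  have : IsFiniteMeasure (m.restrict (regSet p S (k + 1))) :=
    isFiniteMeasure_restrict.2 (hmR _).ne
  have hGL : MemLp G 1 ν :=
    MemLp.of_bound hG.aestronglyMeasurable C (Eventually.of_forall hC)
  have hε : ∀ n : ℕ, ((n : ℝ≥0∞) + 1)⁻¹ ≠ 0 := fun n => by
    simp [ENNReal.inv_eq_zero]
  choose g hg hgL using fun n : ℕ =>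
    hGL.exists_boundedContinuous_eLpNorm_sub_le ENNReal.one_ne_top (hε n)
  have hlim : Tendsto (fun n => eLpNorm ((fun x => g n x) - G) 1 ν) atTop (nhds 0) := by
    refine tendsto_of_tendsto_of_tendsto_of_le_of_le tendsto_const_nhds
      (?_ : Tendsto (fun n : ℕ => ((n : ℝ≥0∞) + 1)⁻¹) atTop (nhds 0))
      (fun n => zero_le) fun n => ?_
    · have := (ENNReal.tendsto_inv_nat_nhds_zero).comp (tendsto_add_atTop_nat 1)
      refine this.congr fun n => ?_
      simp
    · dsimp only
      rw [eLpNorm_sub_comm]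
      exact hg n
  obtain ⟨ns, -, hns⟩ := (tendstoInMeasure_of_tendsto_eLpNorm one_ne_zero
    (fun n => (g n).continuous.aestronglyMeasurable) hG.aestronglyMeasurable
    hlim).exists_seq_tendsto_ae
  obtain ⟨χ, hχ0, hχ1, hχ⟩ := exists_continuous_zero_one_of_isClosed
    (s := (interior (regSet p S (k + 1)))ᶜ) (t := regSet p S k)
    isOpen_interior.isClosed_compl (regSet_isClosed p S k)
    (disjoint_compl_left_iff_subset.2 (regSet_subset_interior p S k))
  have hC0 : ∀ x : X, 0 ≤ C := fun x => (abs_nonneg _).trans (hC x)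
  have hχs : ∀ x, x ∉ regSet p S (k + 1) → χ x = 0 := fun x hx =>
    hχ0 fun h => hx (interior_subset h)
  have hGs : ∀ x, x ∉ regSet p S k → G x = 0 := fun x hx => by
    by_contra h; exact hx (hk h)
  have key : ∀ x, Tendsto (fun n => g (ns n) x) atTop (nhds (G x)) →
      Tendsto (fun n => max (-C) (min C (g (ns n) x)) * χ x) atTop (nhds (G x)) := by
    intro x hx
    have e : max (-C) (min C (G x)) * χ x = G x := by
      have := abs_le.1 (hC x)
      rw [min_eq_right this.2, max_eq_right this.1]
      by_cases h : x ∈ regSet p S k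
      · rw [hχ1 h]; simp
      · rw [hGs x h, zero_mul]
    have := (tendsto_const_nhds (x := -C)).max ((tendsto_const_nhds (x := C)).min hx)
    exact e ▸ this.mul_const (χ x)
  rw [hν, ae_add_measure_iff, ae_restrict_iff' hRm] at hns
  refine ⟨fun n x => max (-C) (min C (g (ns n) x)) * χ x, fun n => ?_, fun n x => ?_,
    fun n x hx => ?_, ?_, ?_⟩
  · fun_prop
  · rw [abs_mul, abs_of_nonneg (hχ x).1]
    have h1 : |max (-C) (min C (g (ns n) x))| ≤ C :=
      abs_le.2 ⟨le_max_left _ _, max_le (by linarith [hC0 x]) (min_le_left _ _)⟩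
    calc _ ≤ C * 1 := mul_le_mul h1 (hχ x).2 (hχ x).1 (hC0 x)
      _ = C := mul_one C
  · by_contra h
    exact hx (by simp only [hχs x h, mul_zero])
  · filter_upwards [hns.1] with x hx using key x hx
  · filter_upwards [hns.2] with x hx
    by_cases h : x ∈ regSet p S (k + 1)
    · exact key x (hx h)
    · have h2 : G x = 0 := hGs x fun h' => h (regSet_mono p S (Nat.le_succ k) h')
      simp only [hχs x h, mul_zero, h2]
      exact tendsto_const_nhds

theorem integrable_legendreConj (p : X) (S : Set X) {N : ℝ} (hN : N < 0) (m : Measure X)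
    (hmR : ∀ k : ℕ, m (regSet p S k) < ⊤) {G : X → ℝ} (hG : Measurable G) {C : ℝ}
    (hC : ∀ x, |G x| ≤ C) {k : ℕ} (hk : Function.support G ⊆ regSet p S k) :
    Integrable (fun x => legendreConj N (G x)) m := by
  refine Integrable.mono' (g := (regSet p S k).indicator fun _ => legendreConj N C)
    ((integrable_indicator_iff (regSet_isClosed p S k).measurableSet).2
      (integrableOn_const (hmR k).ne))
    ((legendreConj_continuous hN).measurable.comp hG).aestronglyMeasurable
    (Eventually.of_forall fun x => ?_)
  rw [Real.norm_of_nonneg (legendreConj_nonneg hN _)]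
  by_cases h : x ∈ regSet p S k
  · rw [indicator_of_mem h]; exact legendreConj_mono hN (hC x)
  · have : G x = 0 := by by_contra h'; exact h (hk h')
    rw [indicator_of_notMem h, this, legendreConj_zero hN]

/-- A bound on the functional over bounded continuous `F` supported in some `R^k` extends to
bounded measurable functions vanishing off some `R^k`. -/
theorem measurable_bound (p : X) (S : Set X) {N : ℝ} (hN : N < 0) (m μ : Measure X)
    [IsFiniteMeasure μ] (hmR : ∀ k : ℕ, m (regSet p S k) < ⊤) {A : ℝ}
    (hA : ∀ F : X → ℝ, Continuous F → (∃ C : ℝ, ∀ x, |F x| ≤ C) →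
      (∃ k : ℕ, Function.support F ⊆ regSet p S k) →
      ∫ x, F x ∂μ - ∫ x, legendreConj N (F x) ∂m ≤ A)
    {G : X → ℝ} (hG : Measurable G) {C : ℝ}
    (hC : ∀ x, |G x| ≤ C) {k : ℕ} (hk : Function.support G ⊆ regSet p S k) :
    ∫ x, G x ∂μ - ∫ x, legendreConj N (G x) ∂m ≤ A := by
  obtain ⟨F, hFc, hFC, hFs, hFμ, hFm⟩ := exists_approx p S m μ hmR hG hC hk
  have t1 : Tendsto (fun n => ∫ x, F n x ∂μ) atTop (nhds (∫ x, G x ∂μ)) :=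
    tendsto_integral_of_dominated_convergence (fun _ => C)
      (fun n => (hFc n).aestronglyMeasurable) (integrable_const C)
      (fun n => Eventually.of_forall (hFC n)) hFμ
  have t2 : Tendsto (fun n => ∫ x, legendreConj N (F n x) ∂m) atTop
      (nhds (∫ x, legendreConj N (G x) ∂m)) := by
    refine tendsto_integral_of_dominated_convergence
      ((regSet p S (k + 1)).indicator fun _ => legendreConj N C)
      (fun n => ((legendreConj_continuous hN).comp (hFc n)).aestronglyMeasurable)
      ((integrable_indicator_iff (regSet_isClosed p S _).measurableSet).2
        (integrableOn_const (hmR _).ne))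
      (fun n => Eventually.of_forall fun x => ?_) ?_
    · rw [Real.norm_of_nonneg (legendreConj_nonneg hN _)]
      by_cases h : x ∈ regSet p S (k + 1)
      · rw [indicator_of_mem h]; exact legendreConj_mono hN (hFC n x)
      · have : F n x = 0 := by by_contra h'; exact h (hFs n h')
        rw [indicator_of_notMem h, this, legendreConj_zero hN]
    · filter_upwards [hFm] with x hx
      exact ((legendreConj_continuous hN).tendsto _).comp hx
  exact le_of_tendsto' (t1.sub t2) fun n => hA _ (hFc n) ⟨C, hFC n⟩ ⟨_, hFs n⟩

/-! ### Absolute continuity and the two inequalities -/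

/-- Test against multiples `t · 1_{E ∩ R^k}` for an `m`-null set `E`: the `f*` term vanishes, so
`t μ(E ∩ R^k)` stays bounded as `t → ∞`. -/
theorem absolutelyContinuous (p : X) {S : Set X} (hS : IsClosed S) {N : ℝ} (hN : N < 0)
    (m μ : Measure X) [IsFiniteMeasure μ] (hμS : μ S = 0) {A : ℝ}
    (hA : ∀ (G : X → ℝ) (C : ℝ) (k : ℕ), Measurable G → (∀ x, |G x| ≤ C) →
      Function.support G ⊆ regSet p S k →
      ∫ x, G x ∂μ - ∫ x, legendreConj N (G x) ∂m ≤ A) : μ ≪ m := by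
  refine Measure.AbsolutelyContinuous.mk fun E hE hmE => ?_
  have hk : ∀ k, μ (E ∩ regSet p S k) = 0 := by
    intro k
    have hEm := hE.inter (regSet_isClosed p S k).measurableSet
    have hb : ∀ t : ℕ, t * μ.real (E ∩ regSet p S k) ≤ A := by
      intro t
      have h := hA ((E ∩ regSet p S k).indicator fun _ => (t : ℝ)) t k
        (measurable_const.indicator hEm) (fun x => by
          by_cases hx : x ∈ E ∩ regSet p S k <;> simp [hx])
        (fun x hx => by
          by_contra h
          exact hx (indicator_of_notMem (fun h' => h h'.2) _))
      have h0 : ∫ x, legendreConj N ((E ∩ regSet p S k).indicator (fun _ => (t : ℝ)) x) ∂m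
          = 0 := by
        refine integral_eq_zero_of_ae ?_
        have : ∀ᵐ x ∂m, x ∉ E := measure_eq_zero_iff_ae_notMem.1 hmE
        filter_upwards [this] with x hx
        rw [indicator_of_notMem fun h => hx h.1, legendreConj_zero hN]; rfl
      rw [h0, sub_zero, integral_indicator_const _ hEm, smul_eq_mul, mul_comm] at h
      exact h
    by_contra hne
    have hpos : 0 < μ.real (E ∩ regSet p S k) := by
      rw [measureReal_def]
      exact ENNReal.toReal_pos hne (measure_ne_top _ _)
    obtain ⟨t, ht⟩ := exists_nat_gt (A / μ.real (E ∩ regSet p S k))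
    rw [div_lt_iff₀ hpos] at ht
    exact absurd (hb t) ht.not_ge
  refine measure_mono_null (fun x hx => ?_) (measure_union_null hμS (measure_iUnion_null hk))
  by_cases h : x ∈ S
  · exact Or.inl h
  · obtain ⟨k, hk⟩ := exists_mem_regSet p hS h
    exact Or.inr (mem_iUnion.2 ⟨k, hx, hk⟩)

/-- The bound `∫_{R^n} min(ρ, n)^q dm ≤ A`, obtained from the test function `f'(r)` with
`r = 1_{R^n} min(ρ, n)`, for which `ρ f'(r) - f*(f'(r)) ≥ r f'(r) - f*(f'(r)) ≥ r^q`. -/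
theorem lintegral_truncation_le (p : X) (S : Set X) {N : ℝ} (hN : N < 0)
    (m μ : Measure X) [IsFiniteMeasure μ] (hmR : ∀ k : ℕ, m (regSet p S k) < ⊤) {A : ℝ}
    (hA : ∀ (G : X → ℝ) (C : ℝ) (k : ℕ), Measurable G → (∀ x, |G x| ≤ C) →
      Function.support G ⊆ regSet p S k →
      ∫ x, G x ∂μ - ∫ x, legendreConj N (G x) ∂m ≤ A)
    {ρ : X → ℝ≥0∞} (hρ : Measurable ρ) (hμ : μ = m.withDensity ρ)
    (hρt : ∀ᵐ x ∂m, ρ x < ⊤) (n : ℕ) :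
    ∫⁻ x, (regSet p S n).indicator (fun x => min (ρ x) n ^ (1 - 1 / N)) x ∂m ≤
      ENNReal.ofReal A := by
  have hq := one_lt_expo hN
  have hRm := (regSet_isClosed p S n).measurableSet
  set r : X → ℝ := (regSet p S n).indicator fun x => (min (ρ x) n).toReal with hr
  have hrm : Measurable r := ((hρ.min measurable_const).ennreal_toReal).indicator hRm
  have hr0 : ∀ x, 0 ≤ r x := fun x => indicator_nonneg (fun _ _ => ENNReal.toReal_nonneg) x
  have hrs : ∀ x, x ∉ regSet p S n → r x = 0 := fun x hx => indicator_of_notMem hx _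
  have hrn : ∀ x, r x ≤ n := fun x => by
    by_cases h : x ∈ regSet p S n
    swap; · rw [hrs x h]; positivity
    rw [hr, indicator_of_mem h]
    exact ENNReal.toReal_le_of_le_ofReal (by positivity) (by simp)
  set G : X → ℝ := fun x => (1 - 1 / N) * r x ^ (1 - 1 / N - 1) with hG
  have hGm : Measurable G := by fun_prop
  have hGC : ∀ x, |G x| ≤ (1 - 1 / N) * (n : ℝ) ^ (1 - 1 / N - 1) := fun x => by
    rw [abs_of_nonneg (mul_nonneg (by linarith) (Real.rpow_nonneg (hr0 x) _))]
    exact mul_le_mul_of_nonneg_left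
      (Real.rpow_le_rpow (hr0 x) (hrn x) (by linarith)) (by linarith)
  have hGs : Function.support G ⊆ regSet p S n := fun x hx => by
    by_contra h
    exact hx (by simp only [hG, hrs x h]; rw [Real.zero_rpow (by linarith), mul_zero])
  have h := hA G _ n hGm hGC hGs
  have hI := integrable_legendreConj p S hN m hmR hGm hGC hGs
  have hGi : Integrable G (m.withDensity ρ) := by
    rw [← hμ]
    exact Integrable.of_bound hGm.aestronglyMeasurable _ (Eventually.of_forall hGC)
  rw [hμ, integral_withDensity_eq_integral_toReal_smul hρ hρt] at h
  rw [integrable_withDensity_iff_integrable_smul' hρ hρt] at hGi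
  rw [← integral_sub hGi hI] at h
  have hpt : ∀ᵐ x ∂m, r x ^ (1 - 1 / N) ≤ (ρ x).toReal • G x - legendreConj N (G x) := by
    filter_upwards [hρt] with x hx
    have h1 := legendreConj_deriv hN (hr0 x)
    have h2 : r x ≤ (ρ x).toReal := by
      by_cases h : x ∈ regSet p S n
      · rw [hr, indicator_of_mem h]
        exact ENNReal.toReal_mono hx.ne (min_le_left _ _)
      · rw [hrs x h]; exact ENNReal.toReal_nonneg
    have h3 := mul_le_mul_of_nonneg_right h2
      (mul_nonneg (by linarith) (Real.rpow_nonneg (hr0 x) _) : 0 ≤ G x)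
    have h4 : r x * G x = (1 - 1 / N) * r x ^ (1 - 1 / N) := by
      rcases (hr0 x).eq_or_lt with h | h
      · rw [← h, Real.zero_rpow (by linarith), zero_mul, mul_zero]
      · simp only [hG]; rw [Real.rpow_sub_one h.ne']; field_simp
    rw [smul_eq_mul]
    simp only [hG] at h1 h3 h4 ⊢
    linarith
  calc ∫⁻ x, (regSet p S n).indicator (fun x => min (ρ x) n ^ (1 - 1 / N)) x ∂m
      = ∫⁻ x, ENNReal.ofReal (r x ^ (1 - 1 / N)) ∂m := by
        refine lintegral_congr fun x => ?_
        by_cases hx : x ∈ regSet p S n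
        · rw [indicator_of_mem hx, hr, indicator_of_mem hx,
            ← ENNReal.ofReal_rpow_of_nonneg ENNReal.toReal_nonneg (by linarith),
            ENNReal.ofReal_toReal (ne_top_of_le_ne_top (natCast_ne_top n) (min_le_right _ _))]
        · rw [indicator_of_notMem hx, hrs x hx, Real.zero_rpow (by linarith), ofReal_zero]
    _ ≤ ∫⁻ x, ENNReal.ofReal ((ρ x).toReal • G x - legendreConj N (G x)) ∂m :=
        lintegral_mono_ae (hpt.mono fun x hx => ENNReal.ofReal_le_ofReal hx)
    _ = ENNReal.ofReal (∫ x, ((ρ x).toReal • G x - legendreConj N (G x)) ∂m) :=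
        (ofReal_integral_eq_lintegral_ofReal (hGi.sub hI)
          (hpt.mono fun x hx => (Real.rpow_nonneg (hr0 x) _).trans hx)).symm
    _ ≤ ENNReal.ofReal A := ENNReal.ofReal_le_ofReal h

/-- Removal of the truncation by monotone convergence. -/
theorem lintegral_rpow_le (p : X) {S : Set X} (hS : IsClosed S) {N : ℝ} (hN : N < 0)
    (m μ : Measure X) [IsFiniteMeasure μ] (hmS : m S = 0)
    (hmR : ∀ k : ℕ, m (regSet p S k) < ⊤) {A : ℝ}
    (hA : ∀ (G : X → ℝ) (C : ℝ) (k : ℕ), Measurable G → (∀ x, |G x| ≤ C) →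
      Function.support G ⊆ regSet p S k →
      ∫ x, G x ∂μ - ∫ x, legendreConj N (G x) ∂m ≤ A)
    {ρ : X → ℝ≥0∞} (hρ : Measurable ρ) (hμ : μ = m.withDensity ρ)
    (hρt : ∀ᵐ x ∂m, ρ x < ⊤) :
    ∫⁻ x, ρ x ^ (1 - 1 / N) ∂m ≤ ENNReal.ofReal A := by
  have hq := one_lt_expo hN
  refine le_of_tendsto' (lintegral_tendsto_of_tendsto_of_monotone
    (f := fun n => (regSet p S n).indicator (fun x => min (ρ x) n ^ (1 - 1 / N)))
    (fun n => ?_) (Eventually.of_forall fun x => ?_) ?_)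
    (lintegral_truncation_le p S hN m μ hmR hA hρ hμ hρt)
  · exact (((hρ.min measurable_const).pow_const _).indicator
      (regSet_isClosed p S n).measurableSet).aemeasurable
  · intro i j hij
    dsimp only
    by_cases h : x ∈ regSet p S i
    · rw [indicator_of_mem h, indicator_of_mem (regSet_mono p S hij h)]
      exact ENNReal.rpow_le_rpow (min_le_min_left _ (Nat.cast_le.2 hij)) (by linarith)
    · rw [indicator_of_notMem h]; exact zero_le
  · filter_upwards [hρt, measure_eq_zero_iff_ae_notMem.1 hmS] with x hx hxS
    obtain ⟨k, hk⟩ := exists_mem_regSet p hS hxS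
    obtain ⟨l, hl⟩ := ENNReal.exists_nat_gt hx.ne
    refine tendsto_const_nhds.congr' ?_
    filter_upwards [eventually_ge_atTop k, eventually_ge_atTop l] with n hn hnl
    rw [indicator_of_mem (regSet_mono p S hn hk),
      min_eq_left (hl.le.trans (Nat.cast_le.2 hnl))]

/-- The easy inequality, by integrating Fenchel's inequality. -/
theorem legendre_le_lintegral (p : X) (S : Set X) {N : ℝ} (hN : N < 0)
    (m μ : Measure X) [IsFiniteMeasure μ] (hmR : ∀ k : ℕ, m (regSet p S k) < ⊤)
    {ρ : X → ℝ≥0∞} (hρ : Measurable ρ) (hμ : μ = m.withDensity ρ)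
    (hρt : ∀ᵐ x ∂m, ρ x < ⊤) {G : X → ℝ} (hG : Measurable G) {C : ℝ}
    (hC : ∀ x, |G x| ≤ C) {k : ℕ} (hk : Function.support G ⊆ regSet p S k) :
    ENNReal.ofReal (∫ x, G x ∂μ - ∫ x, legendreConj N (G x) ∂m) ≤
      ∫⁻ x, ρ x ^ (1 - 1 / N) ∂m := by
  have hq := one_lt_expo hN
  have hI := integrable_legendreConj p S hN m hmR hG hC hk
  have hGi : Integrable G (m.withDensity ρ) := by
    rw [← hμ]
    exact Integrable.of_bound hG.aestronglyMeasurable _ (Eventually.of_forall hC)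
  rw [hμ, integral_withDensity_eq_integral_toReal_smul hρ hρt]
  rw [integrable_withDensity_iff_integrable_smul' hρ hρt] at hGi
  rw [← integral_sub hGi hI]
  have hD := hGi.sub hI
  calc ENNReal.ofReal (∫ x, ((ρ x).toReal • G x - legendreConj N (G x)) ∂m)
      ≤ ENNReal.ofReal (∫ x, max ((ρ x).toReal • G x - legendreConj N (G x)) 0 ∂m) :=
        ENNReal.ofReal_le_ofReal (integral_mono hD hD.pos_part fun x => le_max_left _ _)
    _ = ∫⁻ x, ENNReal.ofReal (max ((ρ x).toReal • G x - legendreConj N (G x)) 0) ∂m :=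
        ofReal_integral_eq_lintegral_ofReal hD.pos_part
          (Eventually.of_forall fun x => le_max_right _ _)
    _ ≤ ∫⁻ x, ρ x ^ (1 - 1 / N) ∂m := by
        refine lintegral_mono_ae ?_
        filter_upwards [hρt] with x hx
        have h1 := fenchel hN (ρ x).toReal (G x)
        rw [abs_of_nonneg ENNReal.toReal_nonneg] at h1
        have h2 : max ((ρ x).toReal • G x - legendreConj N (G x)) 0 ≤
            (ρ x).toReal ^ (1 - 1 / N) :=
          max_le (by rw [smul_eq_mul]; linarith) (Real.rpow_nonneg ENNReal.toReal_nonneg _)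
        refine (ENNReal.ofReal_le_ofReal h2).trans_eq ?_
        rw [← ENNReal.ofReal_rpow_of_nonneg ENNReal.toReal_nonneg (by linarith),
          ENNReal.ofReal_toReal hx.ne]

end Approx

/-- Legendre-type representation of the Rényi entropy: for `N < 0`,
a Borel measure `m` vanishing on a closed set `S` with empty interior and finite on each
regular set `R^k`, and a Borel probability measure `μ` with `μ(S) = 0`,
`S_{N,m}(μ)` is the supremum of `∫ F dμ − ∫ f*(F) dm` over all bounded continuous
functions `F` supported in some `R^k`. -/
theorem renyiEntropy_eq_sSup_legendre
    {X : Type*} [MetricSpace X] [CompleteSpace X]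
    [TopologicalSpace.SeparableSpace X] [MeasurableSpace X] [BorelSpace X]
    (p : X) (S : Set X) (hS : IsClosed S) (hSint : interior S = ∅)
    (N : ℝ) (hN : N < 0)
    (m : Measure X) (hmS : m S = 0) (hmR : ∀ k : ℕ, m (regSet p S k) < ⊤)
    (μ : Measure X) [IsProbabilityMeasure μ] (hμS : μ S = 0) :
    renyiEntropy N m μ =
      sSup { r : ℝ≥0∞ | ∃ F : X → ℝ, Continuous F ∧ (∃ C : ℝ, ∀ x, |F x| ≤ C) ∧
        (∃ k : ℕ, Function.support F ⊆ regSet p S k) ∧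
        r = ENNReal.ofReal (∫ x, F x ∂μ - ∫ x, legendreConj N (F x) ∂m) } := by
  have hfin : ∀ ρ : X → ℝ≥0∞, Measurable ρ → μ = m.withDensity ρ → ∀ᵐ x ∂m, ρ x < ⊤ := by
    intro ρ hρ hμ
    refine ae_lt_top hρ ?_
    have h1 : μ univ = ∫⁻ x, ρ x ∂m := by
      rw [hμ, withDensity_apply _ MeasurableSet.univ, Measure.restrict_univ]
    rw [← h1]; exact measure_ne_top _ _
  apply le_antisymm
  · by_cases htop : sSup { r : ℝ≥0∞ | ∃ F : X → ℝ, Continuous F ∧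
        (∃ C : ℝ, ∀ x, |F x| ≤ C) ∧ (∃ k : ℕ, Function.support F ⊆ regSet p S k) ∧
        r = ENNReal.ofReal (∫ x, F x ∂μ - ∫ x, legendreConj N (F x) ∂m) } = ⊤
    · rw [htop]; exact le_top
    rw [← ENNReal.ofReal_toReal htop]
    have hA := fun (G : X → ℝ) (C : ℝ) (k : ℕ) hG hC hk =>
      measurable_bound p S hN m μ hmR (fun F h1 h2 h3 =>
        (ENNReal.ofReal_le_iff_le_toReal htop).1 (le_sSup ⟨F, h1, h2, h3, rfl⟩))
        (G := G) hG (C := C) hC (k := k) hk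
    have : SigmaFinite m := ⟨⟨{
      set := fun k => S ∪ regSet p S k
      set_mem := fun _ => trivial
      finite := fun k => (measure_union_le _ _).trans_lt (by rw [hmS, zero_add]; exact hmR k)
      spanning := eq_univ_of_forall fun x => by
        by_cases h : x ∈ S
        · exact mem_iUnion.2 ⟨0, Or.inl h⟩
        · obtain ⟨k, hk⟩ := exists_mem_regSet p hS h
          exact mem_iUnion.2 ⟨k, Or.inr hk⟩ }⟩⟩
    have hac := absolutelyContinuous p hS hN m μ hμS hA
    have hex : ∃ ρ : X → ℝ≥0∞, Measurable ρ ∧ μ = m.withDensity ρ :=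
      ⟨μ.rnDeriv m, Measure.measurable_rnDeriv μ m, (Measure.withDensity_rnDeriv_eq μ m hac).symm⟩
    rw [renyiEntropy, dif_pos hex]
    obtain ⟨hρ, hμ⟩ := hex.choose_spec
    exact lintegral_rpow_le p hS hN m μ hmS hmR hA hρ hμ (hfin _ hρ hμ)
  · refine sSup_le ?_
    rintro _ ⟨F, hF, ⟨C, hC⟩, ⟨k, hk⟩, rfl⟩
    rw [renyiEntropy]
    split_ifs with hex
    · obtain ⟨hρ, hμ⟩ := hex.choose_spec
      exact legendre_le_lintegral p S hN m μ hmR hρ hμ (hfin _ hρ hμ) hF.measurable hC hk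
    · exact le_top
end

section
/- Let K ≥ 0, N < 0, let (X, d) be a complete separable metric space and m a Borel measure on X. Let μ_0 = ρ_0·m and μ_1 = ρ_1·m be Borel probability measures absolutely continuous with respect to m with ∫ ρ_0^{1−1/N} dm < ∞ and ∫ ρ_1^{1−1/N} dm < ∞. Let (π_n)_{n ∈ ℕ} be a sequence of Borel probability measures on X × X converging weakly to π, such that for every n the first marginal of π_n is μ_0 and the second marginal of π_n is μ_1 (hence the same holds for π). Then for every t ∈ [0, 1], lim_{n → ∞} T^{(t)}_{K,N}(π_n | m) = T^{(t)}_{K,N}(π | m), where T^{(t)}_{K,N}(π | m) := ∫_{X×X} [ τ^{(1−t)}_{K,N}(d(x,y)) ρ_0(x)^{−1/N} + τ^{(t)}_{K,N}(d(x,y)) ρ_1(y)^{−1/N} ] dπ(x,y). -/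
/-!
Both summands of the integrand have the form `a z * f (p z)`, where `p` is a coordinate projection,
`a` is a distortion coefficient evaluated at the distance and `f = ρ ^ (-1/N)`. The function `a` is
continuous and bounded (`continuous_tauCoef`, `exists_abs_tauCoef_le`), and finiteness of the
entropy says exactly that `f` is integrable for the marginal `μ = ρ·m` (`integrable_rpow_density`).

All the plans, and hence also their weak limit (`map_eq_of_weak`), have the same marginal `μ`
along `p`. If `g` is bounded and continuous with `‖f - g‖` small in `L¹(μ)`, replacing `f` by `g`
changes the integral against any of these plans by at most `sup |a| * ‖f - g‖_{L¹(μ)}`, uniformly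
in the plan, while the integral of the bounded continuous function `a * g ∘ p` converges. This is
`tendsto_integral_mul_comp`.
-/

open MeasureTheory Set ENNReal NNReal Filter

/-- The distortion coefficient `σ_κ^{(t)}(θ)` for `κ ≤ 0`:
`sinh(tθ√(−κ))/sinh(θ√(−κ))` if `κ < 0` and `θ > 0`, and `t` if `κ = 0` or `θ = 0`. -/
noncomputable def sigmaNonpos (κ t θ : ℝ) : ℝ :=
  if κ < 0 ∧ 0 < θ then
    Real.sinh (t * θ * Real.sqrt (-κ)) / Real.sinh (θ * Real.sqrt (-κ))
  else t

/-- The distortion coefficient `τ^{(t)}_{K,N}(θ) = t^{1/N} · σ_{K/(N−1)}^{(t)}(θ)^{(N−1)/N}`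
for `K ≥ 0`, `N < 0`, with the conventions `τ^{(0)} = 0` and `τ^{(1)} = 1`. -/
noncomputable def tauCoef (K N t θ : ℝ) : ℝ :=
  if t = 0 then 0
  else if t = 1 then 1
  else t ^ (1 / N) * (sigmaNonpos (K / (N - 1)) t θ) ^ ((N - 1) / N)

/-- The functional `T^{(t)}_{K,N}(π | m)` associated with densities `ρ₀, ρ₁`. -/
noncomputable def Tfunc {X : Type*} [MetricSpace X] [MeasurableSpace X]
    (K N t : ℝ) (ρ₀ ρ₁ : X → ℝ) (q : Measure (X × X)) : ℝ :=
  ∫ z, (tauCoef K N (1 - t) (dist z.1 z.2) * ρ₀ z.1 ^ (-(1 / N)) +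
        tauCoef K N t (dist z.1 z.2) * ρ₁ z.2 ^ (-(1 / N))) ∂q

lemma continuous_sigmaNonpos (κ t : ℝ) : Continuous (sigmaNonpos κ t) := by
  by_cases hκ : κ < 0
  swap
  · have : sigmaNonpos κ t = fun _ => t := by
      funext θ; simp [sigmaNonpos, hκ]
    rw [this]; exact continuous_const
  have hs : 0 < Real.sqrt (-κ) := Real.sqrt_pos.2 (by linarith)
  set s := Real.sqrt (-κ) with hsdef
  have hd : ∀ c : ℝ, HasDerivAt (fun θ : ℝ => Real.sinh (c * θ)) c 0 := by
    intro c
    have h := ((hasDerivAt_id (0 : ℝ)).const_mul c).sinh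
    simpa using h
  have hc : ∀ c : ℝ, Continuous (dslope (fun θ : ℝ => Real.sinh (c * θ)) 0) := by
    intro c
    rw [← continuousOn_univ, continuousOn_dslope Filter.univ_mem]
    exact ⟨by fun_prop, (hd c).differentiableAt⟩
  have h0 : ∀ c : ℝ, dslope (fun θ : ℝ => Real.sinh (c * θ)) 0 0 = c := by
    intro c; rw [dslope_same, (hd c).deriv]
  have h1 : ∀ c θ : ℝ, 0 < θ → dslope (fun θ : ℝ => Real.sinh (c * θ)) 0 θ
      = Real.sinh (c * θ) / θ := by
    intro c θ hθ
    rw [dslope_of_ne _ hθ.ne', slope_def_field]; simp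
  -- Dividing both `sinh` terms by `θ` removes the singularity at `θ = 0`.
  have key : sigmaNonpos κ t = fun θ =>
      dslope (fun θ : ℝ => Real.sinh ((t * s) * θ)) 0 (max θ 0) /
        dslope (fun θ : ℝ => Real.sinh (s * θ)) 0 (max θ 0) := by
    funext θ
    by_cases hθ : 0 < θ
    · rw [max_eq_left hθ.le, h1 _ _ hθ, h1 _ _ hθ, div_div_div_cancel_right₀ hθ.ne']
      simp only [sigmaNonpos, hκ, hθ, and_self, if_true, ← hsdef]
      congr 2 <;> ring
    · rw [max_eq_right (not_lt.1 hθ), h0, h0]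
      simp only [sigmaNonpos, hθ, and_false, if_false]
      field_simp
  rw [key]
  refine ((hc _).comp (by fun_prop)).div ((hc _).comp (by fun_prop)) ?_
  intro θ
  rcases (le_max_right θ 0).eq_or_lt with h | h
  · simp only [← h, h0]; exact hs.ne'
  · simp only [h1 _ _ h]
    exact (div_pos (Real.sinh_pos_iff.2 (mul_pos hs h)) h).ne'

lemma sigmaNonpos_mem_Icc (κ : ℝ) {t : ℝ} (ht : t ∈ Set.Icc (0 : ℝ) 1) (θ : ℝ) :
    sigmaNonpos κ t θ ∈ Set.Icc (0 : ℝ) 1 := by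
  unfold sigmaNonpos
  split_ifs with h
  · have hs : 0 < Real.sqrt (-κ) := Real.sqrt_pos.2 (by linarith [h.1])
    have hp : 0 < θ * Real.sqrt (-κ) := mul_pos h.2 hs
    have hp' : 0 < Real.sinh (θ * Real.sqrt (-κ)) := Real.sinh_pos_iff.2 hp
    refine ⟨div_nonneg (Real.sinh_nonneg_iff.2 ?_) hp'.le, (div_le_one hp').2
      (Real.sinh_le_sinh.2 ?_)⟩
    · rw [mul_assoc]; exact mul_nonneg ht.1 hp.le
    · rw [mul_assoc]; exact mul_le_of_le_one_left hp.le ht.2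
  · exact ht

lemma exponent_nonneg {N : ℝ} (hN : N < 0) : 0 ≤ (N - 1) / N :=
  div_nonneg_of_nonpos (by linarith) hN.le

lemma continuous_tauCoef (K t : ℝ) {N : ℝ} (hN : N < 0) : Continuous (tauCoef K N t) := by
  unfold tauCoef
  split_ifs
  · exact continuous_const
  · exact continuous_const
  · exact continuous_const.mul
      ((continuous_sigmaNonpos _ _).rpow_const fun _ => Or.inr (exponent_nonneg hN))

lemma exists_abs_tauCoef_le (K : ℝ) {N t : ℝ} (hN : N < 0) (ht : t ∈ Set.Icc (0 : ℝ) 1) :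
    ∃ C : ℝ, ∀ θ, |tauCoef K N t θ| ≤ C := by
  unfold tauCoef
  split_ifs
  · exact ⟨0, by simp⟩
  · exact ⟨1, by simp⟩
  · refine ⟨|t ^ (1 / N)|, fun θ => ?_⟩
    have h := sigmaNonpos_mem_Icc (K / (N - 1)) ht θ
    rw [abs_mul, abs_of_nonneg (Real.rpow_nonneg h.1 _)]
    exact mul_le_of_le_one_right (abs_nonneg _)
      (Real.rpow_le_one h.1 h.2 (exponent_nonneg hN))

/-- Since `ρ ^ (1 - 1/N) = ρ * ρ ^ (-1/N)`, finite entropy is integrability of `ρ ^ (-1/N)` with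
respect to `ρ·m`. -/
lemma integrable_rpow_density {X : Type*} [MeasurableSpace X] {N : ℝ} (hN : N < 0)
    (m : Measure X) {ρ : X → ℝ} (hρ : Measurable ρ) (hpos : ∀ x, 0 ≤ ρ x)
    (hS : ∫⁻ x, (ENNReal.ofReal (ρ x)) ^ (1 - 1 / N) ∂m < ⊤) :
    Integrable (fun x => ρ x ^ (-(1 / N)))
      (m.withDensity (fun x => ENNReal.ofReal (ρ x))) := by
  have hN' : 0 < -(1 / N) := by
    have : 1 / N < 0 := one_div_neg.2 hN
    linarith
  have hm : Measurable (fun x => ρ x ^ (-(1 / N))) := hρ.pow_const _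
  refine ⟨hm.aestronglyMeasurable, ?_⟩
  rw [hasFiniteIntegral_iff_ofReal (ae_of_all _ fun x => Real.rpow_nonneg (hpos x) _),
    lintegral_withDensity_eq_lintegral_mul _ hρ.ennreal_ofReal hm.ennreal_ofReal]
  refine lt_of_eq_of_lt (lintegral_congr fun x => ?_) hS
  rw [Pi.mul_apply, ← ENNReal.ofReal_rpow_of_nonneg (hpos x) hN'.le, sub_eq_add_neg,
    ENNReal.rpow_add_of_nonneg _ _ zero_le_one hN'.le, ENNReal.rpow_one]

/-- Marginals pass to weak limits. -/
lemma map_eq_of_weak {Z X : Type*} [TopologicalSpace Z] [MeasurableSpace Z]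
    [OpensMeasurableSpace Z] [MetricSpace X] [MeasurableSpace X] [BorelSpace X]
    {p : Z → X} (hp : Continuous p) (hpm : Measurable p) {μ : Measure X} [IsProbabilityMeasure μ]
    {π : ℕ → Measure Z} {πLim : Measure Z} [IsProbabilityMeasure πLim]
    (hmarg : ∀ n, (π n).map p = μ)
    (hconv : ∀ g : Z → ℝ, Continuous g → (∃ C : ℝ, ∀ z, |g z| ≤ C) →
      Tendsto (fun n => ∫ z, g z ∂(π n)) atTop (nhds (∫ z, g z ∂πLim))) :
    πLim.map p = μ := by
  have : IsProbabilityMeasure (πLim.map p) :=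
    Measure.isProbabilityMeasure_map hpm.aemeasurable
  refine ext_of_forall_integral_eq_of_IsFiniteMeasure fun f => ?_
  have hi : ∀ q : Measure Z, ∫ x, f x ∂(q.map p) = ∫ z, f (p z) ∂q := fun q =>
    integral_map hpm.aemeasurable f.continuous.measurable.aestronglyMeasurable
  rw [hi]
  refine tendsto_nhds_unique
    (hconv (fun z => f (p z)) (f.continuous.comp hp) ⟨‖f‖, fun z => f.norm_coe_le_norm (p z)⟩) ?_
  simp_rw [← hi, hmarg]
  exact tendsto_const_nhds

/-- If `q` has marginal `μ` along `p`, the error of replacing `f` by `g` in `∫ a * f ∘ p` is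
controlled by the `L¹(μ)` distance, with a constant that does not depend on `q`. -/
lemma abs_integral_mul_comp_sub_le {Z X : Type*} [MeasurableSpace Z] [MeasurableSpace X]
    {p : Z → X} (hpm : Measurable p) {μ : Measure X} {q : Measure Z} (hq : q.map p = μ)
    {a : Z → ℝ} (ha : Measurable a) {C : ℝ} (hC : ∀ z, |a z| ≤ C)
    {f g : X → ℝ} (hf : Integrable f μ) (hg : Integrable g μ) :
    |∫ z, a z * f (p z) ∂q - ∫ z, a z * g (p z) ∂q| ≤ C * ∫ x, ‖f x - g x‖ ∂μ := by
  subst hq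
  have hf' : Integrable (fun z => f (p z)) q := hf.comp_measurable hpm
  have hg' : Integrable (fun z => g (p z)) q := hg.comp_measurable hpm
  have haf := hf'.bdd_mul ha.aestronglyMeasurable (ae_of_all _ hC)
  have hag := hg'.bdd_mul ha.aestronglyMeasurable (ae_of_all _ hC)
  rw [← integral_sub haf hag,
    integral_map (f := fun x => ‖f x - g x‖) hpm.aemeasurable
      (hf.sub hg).norm.aestronglyMeasurable,
    ← integral_const_mul, ← Real.norm_eq_abs]
  refine norm_integral_le_of_norm_le ((hf'.sub hg').norm.const_mul C) (ae_of_all _ fun z => ?_)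
  rw [← mul_sub, norm_mul]
  exact mul_le_mul_of_nonneg_right (hC z) (norm_nonneg _)

/-- Weak convergence together with a fixed marginal `μ` along `p` extends the convergence of
integrals to test functions `a * f ∘ p` with `a` bounded continuous and `f` merely in `L¹(μ)`. -/
lemma tendsto_integral_mul_comp {Z X : Type*} [TopologicalSpace Z] [MeasurableSpace Z]
    [OpensMeasurableSpace Z] [MetricSpace X] [MeasurableSpace X] [BorelSpace X]
    {p : Z → X} (hp : Continuous p) (hpm : Measurable p) {μ : Measure X} [IsProbabilityMeasure μ]
    {π : ℕ → Measure Z} {πLim : Measure Z}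
    (hmarg : ∀ n, (π n).map p = μ) (hmargLim : πLim.map p = μ)
    (hconv : ∀ g : Z → ℝ, Continuous g → (∃ C : ℝ, ∀ z, |g z| ≤ C) →
      Tendsto (fun n => ∫ z, g z ∂(π n)) atTop (nhds (∫ z, g z ∂πLim)))
    {a : Z → ℝ} (ha : Continuous a) (hC : ∃ C : ℝ, ∀ z, |a z| ≤ C)
    {f : X → ℝ} (hf : Integrable f μ) :
    Tendsto (fun n => ∫ z, a z * f (p z) ∂(π n)) atTop (nhds (∫ z, a z * f (p z) ∂πLim)) := by
  obtain ⟨C₀, hC₀⟩ := hC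
  -- Enlarging the bound makes it positive, so that one may divide by it.
  obtain ⟨C, hCpos, hC⟩ : ∃ C : ℝ, 0 < C ∧ ∀ z, |a z| ≤ C :=
    ⟨max C₀ 1, lt_max_of_lt_right one_pos, fun z => (hC₀ z).trans (le_max_left _ _)⟩
  rw [Metric.tendsto_atTop]
  intro ε hε
  obtain ⟨g, hg, hgi⟩ := hf.exists_boundedContinuous_integral_sub_le
    (ε := ε / (4 * C)) (by positivity)
  have herr : ∀ q : Measure Z, q.map p = μ →
      |∫ z, a z * f (p z) ∂q - ∫ z, a z * g (p z) ∂q| ≤ ε / 4 := fun q hq =>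
    (abs_integral_mul_comp_sub_le hpm hq ha.measurable hC hf hgi).trans <| by
      refine (mul_le_mul_of_nonneg_left hg hCpos.le).trans_eq ?_
      field_simp
  have hlim := hconv (fun z => a z * g (p z)) (ha.mul (g.continuous.comp hp))
    ⟨C * ‖g‖, fun z => by
      rw [abs_mul]
      exact mul_le_mul (hC z) (g.norm_coe_le_norm (p z)) (abs_nonneg _) hCpos.le⟩
  obtain ⟨n₀, hn₀⟩ := Metric.tendsto_atTop.1 hlim (ε / 4) (by positivity)
  refine ⟨n₀, fun n hn => ?_⟩
  have h1 := abs_le.1 (herr (π n) (hmarg n))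
  have h2 := abs_le.1 (herr πLim hmargLim)
  have h3 := abs_lt.1 (hn₀ n hn)
  rw [Real.dist_eq, abs_lt]
  constructor <;> linarith [h1.1, h1.2, h2.1, h2.2, h3.1, h3.2]

/-- For `K ≥ 0`, `N < 0`, marginal measures `μ₀ = ρ₀·m`, `μ₁ = ρ₁·m`
with finite Rényi entropy, and a sequence of plans `π_n` with marginals `μ₀, μ₁`
converging weakly to `π`, the functionals `T^{(t)}_{K,N}(π_n | m)` converge to
`T^{(t)}_{K,N}(π | m)` for every `t ∈ [0,1]`. -/
theorem Tfunc_continuous_along_weakly_converging_plans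
    {X : Type*} [MetricSpace X] [CompleteSpace X]
    [TopologicalSpace.SeparableSpace X] [MeasurableSpace X] [BorelSpace X]
    (K N : ℝ) (hK : 0 ≤ K) (hN : N < 0)
    (m : Measure X)
    (ρ₀ ρ₁ : X → ℝ) (hρ₀ : Measurable ρ₀) (hρ₁ : Measurable ρ₁)
    (hρ₀pos : ∀ x, 0 ≤ ρ₀ x) (hρ₁pos : ∀ x, 0 ≤ ρ₁ x)
    (μ₀ μ₁ : Measure X)
    (hμ₀ : μ₀ = m.withDensity (fun x => ENNReal.ofReal (ρ₀ x)))
    (hμ₁ : μ₁ = m.withDensity (fun x => ENNReal.ofReal (ρ₁ x)))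
    (hμ₀prob : IsProbabilityMeasure μ₀) (hμ₁prob : IsProbabilityMeasure μ₁)
    (hS₀ : ∫⁻ x, (ENNReal.ofReal (ρ₀ x)) ^ (1 - 1 / N) ∂m < ⊤)
    (hS₁ : ∫⁻ x, (ENNReal.ofReal (ρ₁ x)) ^ (1 - 1 / N) ∂m < ⊤)
    (π : ℕ → Measure (X × X)) (πLim : Measure (X × X))
    (hπprob : ∀ n, IsProbabilityMeasure (π n)) (hπLimprob : IsProbabilityMeasure πLim)
    (hmarg₀ : ∀ n, (π n).map Prod.fst = μ₀) (hmarg₁ : ∀ n, (π n).map Prod.snd = μ₁)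
    (hπconv : ∀ g : X × X → ℝ, Continuous g → (∃ C : ℝ, ∀ z, |g z| ≤ C) →
      Tendsto (fun n => ∫ z, g z ∂(π n)) atTop (nhds (∫ z, g z ∂πLim))) :
    ∀ t ∈ Set.Icc (0 : ℝ) 1,
      Tendsto (fun n => Tfunc K N t ρ₀ ρ₁ (π n)) atTop
        (nhds (Tfunc K N t ρ₀ ρ₁ πLim)) := by
  intro t ht
  have ht' : 1 - t ∈ Set.Icc (0 : ℝ) 1 := ⟨by linarith [ht.2], by linarith [ht.1]⟩
  have : SecondCountableTopology X := UniformSpace.secondCountable_of_separable X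
  have hf₀ : Integrable (fun x => ρ₀ x ^ (-(1 / N))) μ₀ :=
    hμ₀ ▸ integrable_rpow_density hN m hρ₀ hρ₀pos hS₀
  have hf₁ : Integrable (fun x => ρ₁ x ^ (-(1 / N))) μ₁ :=
    hμ₁ ▸ integrable_rpow_density hN m hρ₁ hρ₁pos hS₁
  have hL₀ : πLim.map Prod.fst = μ₀ := map_eq_of_weak continuous_fst measurable_fst hmarg₀ hπconv
  have hL₁ : πLim.map Prod.snd = μ₁ := map_eq_of_weak continuous_snd measurable_snd hmarg₁ hπconv
  have hcont : ∀ s : ℝ, Continuous fun z : X × X => tauCoef K N s (dist z.1 z.2) := fun s =>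
    (continuous_tauCoef K s hN).comp continuous_dist
  have hbdd : ∀ s ∈ Set.Icc (0 : ℝ) 1,
      ∃ C : ℝ, ∀ z : X × X, |tauCoef K N s (dist z.1 z.2)| ≤ C := fun s hs =>
    (exists_abs_tauCoef_le K hN hs).imp fun _ h z => h _
  have hint : ∀ (p : X × X → X), Measurable p → ∀ (μ : Measure X) (f : X → ℝ), Integrable f μ →
      ∀ q : Measure (X × X), q.map p = μ → ∀ s ∈ Set.Icc (0 : ℝ) 1,
      Integrable (fun z => tauCoef K N s (dist z.1 z.2) * f (p z)) q := by
    intro p hp μ f hf q hq s hs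
    obtain ⟨C, hC⟩ := hbdd s hs
    subst hq
    exact (hf.comp_measurable hp).bdd_mul (hcont s).measurable.aestronglyMeasurable
      (ae_of_all _ hC)
  have hsplit : ∀ q : Measure (X × X), q.map Prod.fst = μ₀ → q.map Prod.snd = μ₁ →
      Tfunc K N t ρ₀ ρ₁ q =
        ∫ z, tauCoef K N (1 - t) (dist z.1 z.2) * ρ₀ z.1 ^ (-(1 / N)) ∂q +
        ∫ z, tauCoef K N t (dist z.1 z.2) * ρ₁ z.2 ^ (-(1 / N)) ∂q := fun q h₀ h₁ =>
    integral_add (hint _ measurable_fst μ₀ _ hf₀ q h₀ _ ht')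
      (hint _ measurable_snd μ₁ _ hf₁ q h₁ _ ht)
  rw [hsplit πLim hL₀ hL₁]
  simp_rw [fun n => hsplit (π n) (hmarg₀ n) (hmarg₁ n)]
  exact (tendsto_integral_mul_comp continuous_fst measurable_fst hmarg₀ hL₀ hπconv
      (hcont _) (hbdd _ ht') hf₀).add
    (tendsto_integral_mul_comp continuous_snd measurable_snd hmarg₁ hL₁ hπconv
      (hcont _) (hbdd _ ht) hf₁)
end

section
/- Let K ∈ ℝ, N < 0, and let f : [a, b] → [−∞, +∞] be a function on a real interval. Assume there exists c ∈ (a, b) such that the restrictions f|_{[a,c]} and f|_{[c,b]} are (K,N)-convex and f(c) = −∞. Then f is (K,N)-convex on [a, b]. -/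
/-!
The substance is the case where the endpoints `x₀ < c < x₁` lie on opposite sides of `c`.
Let `z` be a point between them, say `z ≤ c`. Since `f_N(c) = 0`, convexity on `[x₀, c]` bounds
`f_N(z)` by the single term `σ^{(r)}(c - x₀) f_N(x₀)` with `z = r x₀ + (1 - r) c`
(`KNConvexOn.fNval_le_of_bot`). Replacing the endpoint `c` by `x₁` lengthens both the interval and
the distance from `z` to its right end by `d = x₁ - c`, and this only increases the coefficient
(`sigmaCoef_le_of_extend`): with `u ≤ v`,
`sin (u + d) sin v - sin u sin (v + d) = sin d sin (v - u) ≥ 0`, and likewise for `sinh`.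
Hence the single term is already at most the `x₀`-term of the required bound. The case `c ≤ z` is
the mirror image.
-/

open MeasureTheory Set ENNReal NNReal

/-- The distortion coefficient `σ_κ^{(t)}(θ)`, with values in `[0,∞]`:
`+∞` if `κθ² ≥ π²`; `sin(tθ√κ)/sin(θ√κ)` if `0 < κθ² < π²`; `t` if `κθ² = 0`;
`sinh(tθ√(−κ))/sinh(θ√(−κ))` if `κ < 0`. -/
noncomputable def sigmaCoef (κ t θ : ℝ) : ℝ≥0∞ :=
  if Real.pi ^ 2 ≤ κ * θ ^ 2 then ⊤
  else if 0 < κ * θ ^ 2 then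
    ENNReal.ofReal (Real.sin (t * θ * Real.sqrt κ) / Real.sin (θ * Real.sqrt κ))
  else if κ * θ ^ 2 = 0 then ENNReal.ofReal t
  else ENNReal.ofReal (Real.sinh (t * θ * Real.sqrt (-κ)) / Real.sinh (θ * Real.sqrt (-κ)))

/-- `f_N(x) = exp(−f(x)/N)`, with the conventions `f_N = 0` where `f = −∞` and
`f_N = +∞` where `f = +∞` (for `N < 0`). -/
noncomputable def fNval (N : ℝ) (f : ℝ → EReal) (x : ℝ) : ℝ≥0∞ :=
  if f x = ⊤ then ⊤
  else if f x = ⊥ then 0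
  else ENNReal.ofReal (Real.exp (-(f x).toReal / N))

/-- `(K,N)`-convexity of an extended-real-valued function on a set `I ⊆ ℝ`. -/
def KNConvexOn (K N : ℝ) (I : Set ℝ) (f : ℝ → EReal) : Prop :=
  ∀ x₀ ∈ I, ∀ x₁ ∈ I, f x₀ < ⊤ → f x₁ < ⊤ →
    (K < 0 → |x₁ - x₀| < Real.pi * Real.sqrt (N / K)) →
    ∀ t ∈ Set.Icc (0 : ℝ) 1,
      fNval N f ((1 - t) * x₀ + t * x₁) ≤
        sigmaCoef (K / N) (1 - t) |x₁ - x₀| * fNval N f x₀ +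
          sigmaCoef (K / N) t |x₁ - x₀| * fNval N f x₁

/-- Extending an interval of length `v` by `d` beyond the end from which the distance `u` is
measured increases the ratio of sines. -/
lemma sin_div_sin_le_of_extend {u v d : ℝ} (huv : u ≤ v) (hu : 0 ≤ u) (hv : 0 < v)
    (hd : 0 ≤ d) (hπ : v + d < Real.pi) :
    Real.sin u / Real.sin v ≤ Real.sin (u + d) / Real.sin (v + d) := by
  have h1 : 0 < Real.sin v := Real.sin_pos_of_pos_of_lt_pi hv (by linarith)
  have h2 : 0 < Real.sin (v + d) := Real.sin_pos_of_pos_of_lt_pi (by linarith) hπ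
  rw [div_le_div_iff₀ h1 h2]
  have h3 : 0 ≤ Real.sin d * Real.sin (v - u) :=
    mul_nonneg (Real.sin_nonneg_of_nonneg_of_le_pi hd (by linarith))
      (Real.sin_nonneg_of_nonneg_of_le_pi (by linarith) (by linarith))
  have h4 : Real.sin (u + d) * Real.sin v - Real.sin u * Real.sin (v + d)
      = Real.sin d * Real.sin (v - u) := by
    rw [Real.sin_add, Real.sin_add, Real.sin_sub]; ring
  linarith

/-- The hyperbolic counterpart of `sin_div_sin_le_of_extend`. -/
lemma sinh_div_sinh_le_of_extend {u v d : ℝ} (huv : u ≤ v) (hv : 0 < v) (hd : 0 ≤ d) :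
    Real.sinh u / Real.sinh v ≤ Real.sinh (u + d) / Real.sinh (v + d) := by
  have h1 : 0 < Real.sinh v := Real.sinh_pos_iff.2 hv
  have h2 : 0 < Real.sinh (v + d) := Real.sinh_pos_iff.2 (by linarith)
  rw [div_le_div_iff₀ h1 h2]
  have h3 : 0 ≤ Real.sinh d * Real.sinh (v - u) :=
    mul_nonneg (Real.sinh_nonneg_iff.2 hd) (Real.sinh_nonneg_iff.2 (by linarith))
  have h4 : Real.sinh (u + d) * Real.sinh v - Real.sinh u * Real.sinh (v + d)
      = Real.sinh d * Real.sinh (v - u) := by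
    rw [Real.sinh_add, Real.sinh_add, Real.sinh_sub]; ring
  linarith

/-- The distortion coefficient increases when an interval of length `θ'` is extended to length `θ`
by moving the endpoint of weight `1 - s`: the hypothesis `h` says that the distances `s θ'` and
`t θ` of the intermediate point to that endpoint differ by exactly `θ - θ'`. -/
lemma sigmaCoef_le_of_extend {κ s t θ' θ : ℝ} (hs : s ∈ Set.Icc (0 : ℝ) 1) (hθ' : 0 < θ')
    (hθ : θ' ≤ θ) (h : t * θ = s * θ' + (θ - θ')) :
    sigmaCoef κ s θ' ≤ sigmaCoef κ t θ := by
  obtain ⟨hs0, hs1⟩ := hs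
  have hpos : 0 < θ := hθ'.trans_le hθ
  have hsq : 0 < θ ^ 2 := by positivity
  have hsq' : 0 < θ' ^ 2 := by positivity
  have hsθ : s * θ' ≤ θ' := mul_le_of_le_one_left hθ'.le hs1
  unfold sigmaCoef
  by_cases hbig : Real.pi ^ 2 ≤ κ * θ ^ 2
  · rw [if_pos hbig]; exact le_top
  have hlt := not_le.1 hbig
  rcases lt_trichotomy κ 0 with hκ | rfl | hκ
  · have n1 : κ * θ ^ 2 < 0 := mul_neg_of_neg_of_pos hκ hsq
    have n2 : κ * θ' ^ 2 < 0 := mul_neg_of_neg_of_pos hκ hsq'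
    have hπ : 0 < Real.pi ^ 2 := by positivity
    rw [if_neg hbig, if_neg n1.not_gt, if_neg n1.ne, if_neg (by linarith), if_neg n2.not_gt,
      if_neg n2.ne]
    apply ENNReal.ofReal_le_ofReal
    have hq : 0 < √(-κ) := Real.sqrt_pos.2 (by linarith)
    have key := sinh_div_sinh_le_of_extend (u := s * θ' * √(-κ)) (v := θ' * √(-κ))
      (d := (θ - θ') * √(-κ)) (by gcongr) (by positivity)
      (mul_nonneg (by linarith) hq.le)
    rwa [← add_mul, ← add_mul, ← h, add_sub_cancel] at key
  · have hπ : ¬ Real.pi ^ 2 ≤ 0 := not_le.2 (by positivity)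
    simp only [zero_mul, if_neg hπ, lt_irrefl, if_false, if_true]
    apply ENNReal.ofReal_le_ofReal
    -- `t - s = (1 - s) (θ - θ') / θ`
    have : 0 ≤ (t - s) * θ := by
      have := mul_nonneg (sub_nonneg.2 hs1) (sub_nonneg.2 hθ)
      nlinarith
    linarith [nonneg_of_mul_nonneg_left this hpos]
  · have p1 : 0 < κ * θ ^ 2 := mul_pos hκ hsq
    have p2 : 0 < κ * θ' ^ 2 := mul_pos hκ hsq'
    have hle : κ * θ' ^ 2 ≤ κ * θ ^ 2 := by gcongr
    rw [if_neg hbig, if_pos p1, if_neg (by linarith), if_pos p2]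
    apply ENNReal.ofReal_le_ofReal
    have hq : 0 < √κ := Real.sqrt_pos.2 hκ
    have hπ : θ * √κ < Real.pi := by
      apply lt_of_pow_lt_pow_left₀ 2 Real.pi_pos.le
      rwa [mul_pow, Real.sq_sqrt hκ.le, mul_comm]
    have key := sin_div_sin_le_of_extend (u := s * θ' * √κ) (v := θ' * √κ)
      (d := (θ - θ') * √κ) (by gcongr) (by positivity) (by positivity)
      (mul_nonneg (by linarith) hq.le) (by rwa [← add_mul, add_sub_cancel])
    rwa [← add_mul, ← add_mul, ← h, add_sub_cancel] at key

/-- If one endpoint `c` has `f c = -∞`, only the term of the other endpoint survives in the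
convexity inequality, even where the coefficient of `c` is infinite, as `∞ · 0 = 0`. -/
lemma KNConvexOn.fNval_le_of_bot {K N : ℝ} {I : Set ℝ} {f : ℝ → EReal}
    (h : KNConvexOn K N I f) {c x : ℝ} (hc : c ∈ I) (hx : x ∈ I) (hfc : f c = ⊥) (hfx : f x < ⊤)
    (hd : K < 0 → |x - c| < Real.pi * √(N / K)) {r : ℝ} (hr : r ∈ Set.Icc (0 : ℝ) 1) :
    fNval N f ((1 - r) * c + r * x) ≤ sigmaCoef (K / N) r |x - c| * fNval N f x := by
  have key := h c hc x hx (by simp [hfc]) hfx hd r hr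
  have h0 : fNval N f c = 0 := by simp [fNval, hfc]
  rwa [h0, mul_zero, zero_add] at key

/-- Suppose the endpoint opposite to `x` lies at distance `θ` from `x`, at or beyond a point `c`
with `f c = -∞`. At a point `z` between `x` and `c`, the `x`-term of the convexity inequality for
the longer interval alone bounds `f_N(z)`; here `t` is the weight of `x` in `z` relative to that
interval, and `r` the weight relative to the interval from `c` to `x`. -/
lemma KNConvexOn.fNval_le_of_bot_of_extend {K N : ℝ} {I : Set ℝ} {f : ℝ → EReal}
    (h : KNConvexOn K N I f) {c x z t θ : ℝ} (hc : c ∈ I) (hx : x ∈ I) (hfc : f c = ⊥)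
    (hfx : f x < ⊤) (hne : x ≠ c) (hθ : |x - c| ≤ θ) (hd : K < 0 → θ < Real.pi * √(N / K))
    {r : ℝ} (hr : r ∈ Set.Icc (0 : ℝ) 1) (hz : z = (1 - r) * c + r * x)
    (ht : t * θ = r * |x - c| + (θ - |x - c|)) :
    fNval N f z ≤ sigmaCoef (K / N) t θ * fNval N f x := by
  rw [hz]
  refine (h.fNval_le_of_bot hc hx hfc hfx (fun hK => hθ.trans_lt (hd hK)) hr).trans ?_
  gcongr
  exact sigmaCoef_le_of_extend hr (abs_pos.2 (sub_ne_zero.2 hne)) hθ ht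

/-- The convexity inequality when the endpoints lie on opposite sides of `c`. -/
lemma fNval_le_of_lt_of_lt {K N a b c : ℝ} {f : ℝ → EReal} (hfc : f c = ⊥)
    (h₁ : KNConvexOn K N (Set.Icc a c) f) (h₂ : KNConvexOn K N (Set.Icc c b) f)
    {x₀ x₁ : ℝ} (ha : a ≤ x₀) (h0 : x₀ < c) (h1 : c < x₁) (hb : x₁ ≤ b)
    (hf0 : f x₀ < ⊤) (hf1 : f x₁ < ⊤) (hd : K < 0 → |x₁ - x₀| < Real.pi * √(N / K))
    {t : ℝ} (ht : t ∈ Set.Icc (0 : ℝ) 1) :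
    fNval N f ((1 - t) * x₀ + t * x₁) ≤
      sigmaCoef (K / N) (1 - t) |x₁ - x₀| * fNval N f x₀ +
        sigmaCoef (K / N) t |x₁ - x₀| * fNval N f x₁ := by
  obtain ⟨ht0, ht1⟩ := ht
  have e : |x₁ - x₀| = x₁ - x₀ := abs_of_pos (by linarith)
  have e0 : |x₀ - c| = c - x₀ := by rw [abs_sub_comm]; exact abs_of_pos (by linarith)
  have e1 : |x₁ - c| = x₁ - c := abs_of_pos (by linarith)
  rw [e] at hd ⊢
  set z := (1 - t) * x₀ + t * x₁ with hz
  have hz0 : x₀ ≤ z := by nlinarith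
  have hz1 : z ≤ x₁ := by nlinarith
  have p0 : 0 < c - x₀ := by linarith
  have p1 : 0 < x₁ - c := by linarith
  rcases le_total z c with hzc | hzc
  · refine le_trans ?_ le_self_add
    have hr : (c - z) / (c - x₀) * (c - x₀) = c - z := div_mul_cancel₀ _ p0.ne'
    refine h₁.fNval_le_of_bot_of_extend (c := c) (r := (c - z) / (c - x₀))
      ⟨by linarith, le_rfl⟩ ⟨ha, h0.le⟩ hfc hf0 h0.ne (by rw [e0]; linarith) hd
      ⟨div_nonneg (by linarith) p0.le, (div_le_one p0).2 (by linarith)⟩ (by linarith) ?_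
    rw [e0, hr, hz]; ring
  · refine le_trans ?_ le_add_self
    have hr : (z - c) / (x₁ - c) * (x₁ - c) = z - c := div_mul_cancel₀ _ p1.ne'
    refine h₂.fNval_le_of_bot_of_extend (c := c) (r := (z - c) / (x₁ - c))
      ⟨le_rfl, by linarith⟩ ⟨h1.le, hb⟩ hfc hf1 h1.ne' (by rw [e1]; linarith) hd
      ⟨div_nonneg (by linarith) p1.le, (div_le_one p1).2 (by linarith)⟩ (by linarith) ?_
    rw [e1, hr, hz]; ring

/-- If `f : [a,b] → [−∞,∞]` is `(K,N)`-convex on `[a,c]` and on `[c,b]`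
for some `c ∈ (a,b)` with `f(c) = −∞`, then `f` is `(K,N)`-convex on `[a,b]`. -/
theorem knConvexOn_of_glue_bot
    (K N : ℝ) (hN : N < 0) (a b c : ℝ) (hc : c ∈ Set.Ioo a b)
    (f : ℝ → EReal) (hfc : f c = ⊥)
    (h₁ : KNConvexOn K N (Set.Icc a c) f) (h₂ : KNConvexOn K N (Set.Icc c b) f) :
    KNConvexOn K N (Set.Icc a b) f := by
  intro x₀ hx₀ x₁ hx₁ hf0 hf1 hd t ht
  rcases le_or_gt x₀ c with h0 | h0 <;> rcases le_or_gt x₁ c with h1 | h1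
  · exact h₁ x₀ ⟨hx₀.1, h0⟩ x₁ ⟨hx₁.1, h1⟩ hf0 hf1 hd t ht
  · rcases h0.eq_or_lt with rfl | h0
    · exact h₂ x₀ ⟨le_rfl, hx₀.2⟩ x₁ ⟨h1.le, hx₁.2⟩ hf0 hf1 hd t ht
    · exact fNval_le_of_lt_of_lt hfc h₁ h₂ hx₀.1 h0 h1 hx₁.2 hf0 hf1 hd ht
  · rcases h1.eq_or_lt with rfl | h1
    · exact h₂ x₀ ⟨h0.le, hx₀.2⟩ x₁ ⟨le_rfl, hx₁.2⟩ hf0 hf1 hd t ht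
    · -- the inequality is invariant under exchanging the endpoints and replacing `t` by `1 - t`
      have key := fNval_le_of_lt_of_lt hfc h₁ h₂ hx₁.1 h1 h0 hx₀.2 hf1 hf0
        (by rwa [abs_sub_comm]) (t := 1 - t) ⟨by linarith [ht.2], by linarith [ht.1]⟩
      rw [_root_.sub_sub_cancel, abs_sub_comm] at key
      rwa [add_comm ((1 - t) * x₀), add_comm (sigmaCoef _ (1 - t) _ * _)]
  · exact h₂ x₀ ⟨h0.le, hx₀.2⟩ x₁ ⟨h1.le, hx₁.2⟩ hf0 hf1 hd t ht
end
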